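/- Let s and k be natural numbers with k ≥ 3 and 1 ≤ s ≤ (k²−1)/2. Then for each ε > 0 one has I_{s,k,1}(X) ≪ X^{s+ε}, i.e. there is a constant C = C(s,k,ε) such that I_{s,k,1}(X) ≤ C·X^{s+ε} for all sufficiently large real X. -/

import Mathlib

open Finset

/-- `vinogradovSliceCount s k r X` is the number of integral solutions of the system
`x_1^j + ⋯ + x_s^j = y_1^j + ⋯ + y_s^j` for `1 ≤ j ≤ k`, `j ≠ r`, with `1 ≤ x_i, y_i ≤ X`. -/
noncomputable def vinogradovSliceCount (s k r : ℕ) (X : ℝ) : ℕ :=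
  {p : (Fin s → ℤ) × (Fin s → ℤ) |
      (∀ i, 1 ≤ p.1 i ∧ (p.1 i : ℝ) ≤ X) ∧
      (∀ i, 1 ≤ p.2 i ∧ (p.2 i : ℝ) ≤ X) ∧
      ∀ j ∈ Finset.Icc 1 k, j ≠ r →
        ∑ i, (p.1 i) ^ j = ∑ i, (p.2 i) ^ j}.ncard

/-!
Over `ℤ_[p]`, call a curve good if it reduces to the moment curve modulo `p`. On a progression of
difference `p ^ a` a good curve becomes, after an affine change of coordinates, a rescaled good
curve, so `ℓ²` decoupling constants at the critical exponent `k (k + 1) / 2` can be compared across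
scales. Splitting into residue classes modulo `p` reduces decoupling to a bilinear inequality for
two distinct classes; there congruencing passes to curves of smaller dimension, and Hölder's
inequality relates the bilinear inequalities at different scales. Iterating turns any positive
decoupling exponent into a smaller one, which proves the Vinogradov mean value theorem at the
critical exponent.

For the system without its linear equation, translate a solution by `z`: the defect of the linear
equation becomes a multiple of the tangent to the moment curve at `z`. Hence each solution gives
many solutions of the full system corrected by a tangent vector, and these are counted by Hölder's
inequality between the critical Vinogradov moment and the `k`-th moment of the energy of linear
exponential sums in tangent directions. The latter is essentially diagonal: a vanishing combination
of `k` tangent vectors has, by a Vandermonde determinant, vanishing coefficient sums over equal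
points.
-/

namespace VinogradovMeanValue

open Polynomial

section TaylorMatrix

variable {R : Type*} [CommRing R] {l : ℕ}

/-- The matrix of the Taylor coefficients of degrees `1, …, l` at `ξ` of the coordinates of a
polynomial curve `ψ`; up to factorials this is the Wronskian matrix of the derivatives of `ψ`. -/
noncomputable def taylorMatrix (ψ : Fin l → R[X]) (ξ : R) : Matrix (Fin l) (Fin l) R :=
  Matrix.of fun i j ↦ (taylor ξ (ψ i)).coeff (j.val + 1)

lemma map_taylorMatrix {S : Type*} [CommRing S] (f : R →+* S) (ψ : Fin l → R[X]) (ξ : R) :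
    f.mapMatrix (taylorMatrix ψ ξ) = taylorMatrix (fun i ↦ (ψ i).map f) (f ξ) := by
  ext i j
  simp only [taylorMatrix, RingHom.mapMatrix_apply, Matrix.map_apply, Matrix.of_apply,
    ← map_taylor, coeff_map]

lemma taylorMatrix_taylor (ψ : Fin l → R[X]) (a ξ : R) :
    taylorMatrix (fun i ↦ taylor a (ψ i)) ξ = taylorMatrix ψ (ξ + a) := by
  simp only [taylorMatrix, taylor_taylor]

lemma det_taylorMatrix_X_pow (ξ : R) :
    (taylorMatrix (fun i : Fin l ↦ (X : R[X]) ^ (i.val + 1)) ξ).det = 1 := by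
  rw [Matrix.det_of_isLowerTriangular]
  · simp [taylorMatrix, coeff_X_add_C_pow]
  · intro i j hij
    have hij : i.val < j.val := hij
    simp [taylorMatrix, coeff_X_add_C_pow, Nat.choose_eq_zero_of_lt (Nat.succ_lt_succ hij)]

lemma X_pow_dvd_taylor_derivative {P : R[X]} {ζ : R}
    (hP : ∀ d < l, (taylor ζ P).coeff (d + 1) = 0) : X ^ l ∣ taylor ζ (derivative P) := by
  have hcomm : taylor ζ (derivative P) = derivative (taylor ζ P) := by
    simp [taylor_apply, derivative_comp]
  rw [X_pow_dvd_iff]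
  intro d hd
  rw [hcomm, coeff_derivative, hP d hd, zero_mul]

lemma coeff_sum_C_mul_X_pow_val (v : Fin l → R) (i : Fin l) :
    (∑ j, C (v j) * X ^ j.val).coeff i.val = v i := by
  simp [coeff_C_mul, coeff_X_pow, Fin.val_inj]

/-- A linear dependency between the rows would give a nonzero `P = ∑ vᵢ X ^ (m + i + 1)` with
`P'` vanishing to order `l` at `ζ`; but `P' = X ^ m * Q` with `deg Q < l`. -/
lemma isUnit_det_taylorMatrix_X_pow_add {K : Type*} [Field K] (m : ℕ) {ζ : K} (hζ : ζ ≠ 0)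
    (hm : ∀ i < l, ((m + i + 1 : ℕ) : K) ≠ 0) :
    IsUnit (taylorMatrix (fun i : Fin l ↦ (X : K[X]) ^ (m + i.val + 1)) ζ).det := by
  rw [isUnit_iff_ne_zero]
  intro hdet
  obtain ⟨v, hv, hvM⟩ := Matrix.exists_vecMul_eq_zero_iff.mpr hdet
  set P : K[X] := ∑ i, C (v i) * X ^ (m + i.val + 1) with hP
  set Q : K[X] := ∑ i : Fin l, C (v i * ((m + i.val + 1 : ℕ) : K)) * X ^ i.val with hQ
  have hderiv : derivative P = X ^ m * Q := by
    simp only [hP, hQ, derivative_sum, mul_sum, derivative_C_mul_X_pow, Nat.add_sub_cancel]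
    exact sum_congr rfl fun i _ ↦ by rw [pow_add]; ring
  have hcoeff (d : ℕ) (hd : d < l) : (taylor ζ P).coeff (d + 1) = 0 := by
    have hd_col := congrFun hvM ⟨d, hd⟩
    simp only [Matrix.vecMul, dotProduct, taylorMatrix, Matrix.of_apply, Pi.zero_apply] at hd_col
    simp only [hP, map_sum, finsetSum_coeff, taylor_mul, taylor_C, coeff_C_mul, hd_col]
  have hdvd : (X : K[X]) ^ l ∣ taylor ζ Q := by
    have hcop : IsCoprime (X : K[X]) (X + C ζ) :=
      ⟨-C ζ⁻¹, C ζ⁻¹, by rw [mul_add, ← C_mul, inv_mul_cancel₀ hζ, C_1]; ring⟩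
    have hdvd_deriv := X_pow_dvd_taylor_derivative hcoeff
    rw [hderiv, taylor_mul, taylor_X_pow] at hdvd_deriv
    exact hcop.pow.dvd_of_dvd_mul_left hdvd_deriv
  have hQ_zero : Q = 0 := by
    rw [← taylor_eq_zero ζ]
    refine eq_zero_of_dvd_of_degree_lt hdvd ?_
    rw [degree_X_pow, degree_taylor]
    exact degree_sum_fin_lt _
  refine hv (funext fun i ↦ ?_)
  have hvi := coeff_sum_C_mul_X_pow_val (fun i : Fin l ↦ v i * ((m + i.val + 1 : ℕ) : K)) i
  rw [← hQ, hQ_zero, coeff_zero] at hvi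
  exact (mul_eq_zero.mp hvi.symm).resolve_right (hm i i.2)

end TaylorMatrix

section NormalForm

variable {R : Type*} [CommRing R] {l : ℕ} {ι : Type*} [Fintype ι]

/-- The integer points `x`, `y` solve the system `∑ ψ i (x t) ≡ ∑ ψ i (y t)` modulo `d`. -/
def SolvesMod {k : ℕ} (d : R) (ψ : Fin k → R[X]) (x y : ι → ℤ) : Prop :=
  ∀ i, d ∣ ∑ t, ((ψ i).eval (x t : R) - (ψ i).eval (y t : R))

/-- The curve with coordinates `T ^ (j + 1) + T ^ (l + 1) * Q j (T)`, where `T = X - ξ`. Every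
curve with invertible Taylor matrix at `ξ` is brought into this shape by an affine map. -/
noncomputable def normalForm (ξ : R) (Q : Fin l → R[X]) (j : Fin l) : R[X] :=
  taylor (-ξ) (X ^ (j.val + 1) + X ^ (l + 1) * Q j)

/-- The coordinates of `normalForm ξ Q` after the substitution `X = ξ + π * T`, divided by
`π ^ (j + 1)`. -/
noncomputable def rescaledForm (π : R) (Q : Fin l → R[X]) (j : Fin l) : R[X] :=
  X ^ (j.val + 1) + C (π ^ (l - j.val)) * X ^ (l + 1) * (Q j).comp (C π * X)

lemma exists_linearComb_eq_normalForm (ψ : Fin l → R[X]) (ξ : R)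
    (hdet : IsUnit (taylorMatrix ψ ξ).det) :
    ∃ (N : Matrix (Fin l) (Fin l) R) (c : Fin l → R) (Q : Fin l → R[X]),
      ∀ j, ∑ i, C (N j i) * ψ i = C (c j) + normalForm ξ Q j := by
  set N := (taylorMatrix ψ ξ)⁻¹
  set θ : Fin l → R[X] := fun j ↦ ∑ i, C (N j i) * taylor ξ (ψ i)
  have hθ_coeff (j i : Fin l) : (θ j).coeff (i.val + 1) = if j = i then 1 else 0 := by
    rw [← Matrix.one_apply, ← Matrix.nonsing_inv_mul _ hdet, Matrix.mul_apply, finsetSum_coeff]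
    exact sum_congr rfl fun _ _ ↦ coeff_C_mul _
  have hdvd (j : Fin l) : (X : R[X]) ^ (l + 1) ∣ θ j - C ((θ j).coeff 0) - X ^ (j.val + 1) := by
    rw [X_pow_dvd_iff]
    rintro (_ | d) hd
    · simp
    · rw [coeff_sub, coeff_sub, coeff_C_succ, sub_zero, hθ_coeff j ⟨d, by omega⟩, coeff_X_pow,
        sub_eq_zero]
      simp only [Fin.ext_iff, Nat.add_right_cancel_iff, eq_comm]
  choose Q hQ using hdvd
  refine ⟨N, fun j ↦ (θ j).coeff 0, Q, fun j ↦ taylor_injective ξ ?_⟩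
  simp only [normalForm, map_add, map_sum, taylor_mul, taylor_C, taylor_taylor, add_neg_cancel,
    taylor_zero, ← hQ j]
  simp only [θ]
  ring

lemma SolvesMod.of_linearComb {m : ℕ} {d : R} {ψ : Fin l → R[X]} {θ : Fin m → R[X]}
    {x y : ι → ℤ} (N : Matrix (Fin m) (Fin l) R) (c : Fin m → R)
    (hθ : ∀ j, ∑ i, C (N j i) * ψ i = C (c j) + θ j) (h : SolvesMod d ψ x y) :
    SolvesMod d θ x y := by
  intro j
  have hθ_eval (u : R) : (θ j).eval u = ∑ i, N j i * (ψ i).eval u - c j := by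
    rw [eq_sub_iff_add_eq', ← eval_C (a := c j), ← eval_add, ← hθ j]
    simp [eval_finsetSum]
  have hsum : ∑ t, ((θ j).eval (x t : R) - (θ j).eval (y t : R))
      = ∑ i, N j i * ∑ t, ((ψ i).eval (x t : R) - (ψ i).eval (y t : R)) := by
    simp only [hθ_eval, sub_sub_sub_cancel_right, ← sum_sub_distrib, mul_sum, ← mul_sub]
    exact sum_comm
  rw [hsum]
  exact dvd_sum fun i _ ↦ (h i).mul_left _

lemma map_remainder_eq_zero {S : Type*} [CommRing S] (f : R →+* S) {ξ : R} {ψ Q : Fin l → R[X]}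
    {N : Matrix (Fin l) (Fin l) R} {c : Fin l → R}
    (hN : ∀ j, ∑ i, C (N j i) * ψ i = C (c j) + normalForm ξ Q j)
    (hψ : ∀ i, ((ψ i).map f).natDegree ≤ l) (j : Fin l) : (Q j).map f = 0 := by
  have hN_map : (X ^ (l + 1) * Q j).map f
      = taylor (f ξ) (∑ i, C (f (N j i)) * (ψ i).map f) - C (f (c j)) - X ^ (j.val + 1) := by
    have h := congrArg (fun P ↦ taylor (f ξ) (P.map f)) (hN j)
    simp only [normalForm, Polynomial.map_add, Polynomial.map_sum, Polynomial.map_mul, map_C,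
      map_taylor, map_add, taylor_C, taylor_taylor, map_neg, add_neg_cancel, taylor_zero,
      Polynomial.map_pow, map_X] at h
    rw [h]
    simp
  ext d
  rw [← coeff_X_pow_mul (Polynomial.map f (Q j)) (l + 1) d, coeff_zero]
  have hmul : X ^ (l + 1) * (Q j).map f = (X ^ (l + 1) * Q j).map f := by simp
  rw [hmul, hN_map]
  refine coeff_eq_zero_of_natDegree_lt (lt_of_le_of_lt (b := l) ?_ (by omega))
  refine (natDegree_sub_le_of_le ?_ (natDegree_X_pow_le _)).trans (max_le le_rfl j.2)
  rw [natDegree_sub_C, natDegree_taylor]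
  exact natDegree_sum_le_of_forall_le _ _ fun i _ ↦ (natDegree_C_mul_le _ _).trans (hψ i)

lemma pow_dvd_eval_normalForm {ξ a y : R} (Q : Fin l → R[X]) (hy : a ∣ y - ξ) (j : Fin l) :
    a ^ (j.val + 1) ∣ (normalForm ξ Q j).eval y := by
  simp only [normalForm, taylor_eval, ← sub_eq_add_neg, eval_add, eval_mul, eval_pow, eval_X]
  exact dvd_add (pow_dvd_pow_of_dvd hy _)
    (((pow_dvd_pow a (by omega)).trans (pow_dvd_pow_of_dvd hy _)).mul_right _)

lemma eval_normalForm_add_mul (ξ π u : R) (Q : Fin l → R[X]) (j : Fin l) :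
    (normalForm ξ Q j).eval (ξ + π * u) = π ^ (j.val + 1) * (rescaledForm π Q j).eval u := by
  have hpow : π ^ (l + 1) = π ^ (j.val + 1) * π ^ (l - j.val) := by
    rw [← pow_add]
    congr 1
    omega
  simp only [normalForm, rescaledForm, taylor_eval, eval_add, eval_mul, eval_pow, eval_X, eval_C,
    eval_comp, add_neg_cancel_comm, mul_pow, hpow]
  ring

lemma map_rescaledForm {S : Type*} [CommRing S] (f : R →+* S) {π : R} (hπ : f π = 0)
    (Q : Fin l → R[X]) (j : Fin l) : (rescaledForm π Q j).map f = X ^ (j.val + 1) := by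
  have hj : l - j.val ≠ 0 := by omega
  simp [rescaledForm, hπ, hj]

end NormalForm

section Padic

variable {p : ℕ} [Fact p.Prime]

/-- Curves over `ℤ_[p]` that reduce to the moment curve `(X, X ^ 2, …, X ^ k)` modulo `p`. -/
def ReducesToMomentCurve {k : ℕ} (φ : Fin k → ℤ_[p][X]) : Prop :=
  ∀ j, (φ j).map PadicInt.toZMod = X ^ (j.val + 1)

lemma isUnit_det_taylorMatrix_of_map {l : ℕ} (ψ : Fin l → ℤ_[p][X]) (ξ : ℤ_[p])
    (h : IsUnit (taylorMatrix (fun i ↦ (ψ i).map PadicInt.toZMod) (PadicInt.toZMod ξ)).det) :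
    IsUnit (taylorMatrix ψ ξ).det := by
  rw [← map_taylorMatrix, ← RingHom.map_det] at h
  exact isUnit_of_map_unit _ _ h

lemma ReducesToMomentCurve.isUnit_det_taylorMatrix {k : ℕ} {φ : Fin k → ℤ_[p][X]}
    (hφ : ReducesToMomentCurve φ) (η : ℤ_[p]) : IsUnit (taylorMatrix φ η).det := by
  refine isUnit_det_taylorMatrix_of_map φ η ?_
  rw [funext hφ, det_taylorMatrix_X_pow]
  exact isUnit_one

lemma isUnit_det_taylorMatrix_of_map_eq_taylor {l m : ℕ} (hm : m + l < p) (ψ : Fin l → ℤ_[p][X])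
    {η ξ : ℤ} (hne : ¬ (p : ℤ) ∣ ξ - η)
    (hψ : ∀ i, (ψ i).map PadicInt.toZMod = taylor (-(η : ZMod p)) (X ^ (m + i.val + 1))) :
    IsUnit (taylorMatrix ψ (ξ : ℤ_[p])).det := by
  refine isUnit_det_taylorMatrix_of_map ψ ξ ?_
  rw [funext hψ, taylorMatrix_taylor, map_intCast, ← sub_eq_add_neg, ← Int.cast_sub]
  refine isUnit_det_taylorMatrix_X_pow_add m ?_ fun i hi ↦ ?_
  · rwa [Ne, ZMod.intCast_zmod_eq_zero_iff_dvd]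
  · rw [Ne, ZMod.natCast_eq_zero_iff]
    exact Nat.not_dvd_of_pos_of_lt (by omega) (by omega)

/-- Parabolic rescaling: on the progression `ξ + p ^ a ℤ` the curve `ψ` looks like the moment
curve, its `j`-th coordinate being scaled by `p ^ (a * (j + 1))`. -/
lemma exists_rescaled_curve {l : ℕ} (ψ : Fin l → ℤ_[p][X]) (ξ : ℤ)
    (hdet : IsUnit (taylorMatrix ψ (ξ : ℤ_[p])).det) {a : ℕ} (ha : a ≠ 0) :
    ∃ χ : Fin l → ℤ_[p][X], ReducesToMomentCurve χ ∧
      ∀ (s : ℕ) (x y : Fin s → ℤ) (d : ℤ_[p]),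
        SolvesMod d ψ (fun t ↦ ξ + (p : ℤ) ^ a * x t) (fun t ↦ ξ + (p : ℤ) ^ a * y t) →
        ∀ j : Fin l, d ∣ (p : ℤ_[p]) ^ (a * (j.val + 1)) *
          ∑ t, ((χ j).eval (x t : ℤ_[p]) - (χ j).eval (y t : ℤ_[p])) := by
  obtain ⟨N, c, Q, hQ⟩ := exists_linearComb_eq_normalForm ψ (ξ : ℤ_[p]) hdet
  refine ⟨rescaledForm ((p : ℤ_[p]) ^ a) Q, fun j ↦ map_rescaledForm _ (by simp [ha]) Q j, ?_⟩
  intro s x y d hsol j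
  have hdvd := hsol.of_linearComb N c hQ j
  simp only [Int.cast_add, Int.cast_mul, Int.cast_pow, Int.cast_natCast,
    eval_normalForm_add_mul] at hdvd
  simpa only [← mul_sub, ← mul_sum, pow_mul] using hdvd

lemma ReducesToMomentCurve.exists_normalForm {k : ℕ} {φ : Fin k → ℤ_[p][X]}
    (hφ : ReducesToMomentCurve φ) (η : ℤ) :
    ∃ θ : Fin k → ℤ_[p][X],
      (∀ j, (θ j).map PadicInt.toZMod = taylor (-(η : ZMod p)) (X ^ (j.val + 1))) ∧
      (∀ (j : Fin k) (b : ℕ) (y : ℤ), (p : ℤ) ^ b ∣ y - η →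
        (p : ℤ_[p]) ^ (b * (j.val + 1)) ∣ (θ j).eval (y : ℤ_[p])) ∧
      ∀ (s : ℕ) (x y : Fin s → ℤ) (d : ℤ_[p]), SolvesMod d φ x y → SolvesMod d θ x y := by
  obtain ⟨N, c, Q, hQ⟩ :=
    exists_linearComb_eq_normalForm φ (η : ℤ_[p]) (hφ.isUnit_det_taylorMatrix _)
  refine ⟨normalForm (η : ℤ_[p]) Q, fun j ↦ ?_, fun j b y hy ↦ ?_,
    fun s x y d hsol ↦ hsol.of_linearComb N c hQ⟩
  · have hQ_map := map_remainder_eq_zero PadicInt.toZMod hQ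
      (fun i ↦ by rw [hφ i]; exact (natDegree_X_pow_le _).trans i.2) j
    simp [normalForm, map_taylor, hQ_map]
  · rw [pow_mul]
    refine pow_dvd_eval_normalForm Q ?_ j
    simpa using map_dvd (Int.castRingHom ℤ_[p]) hy

end Padic

section Holder

lemma sum_rpow_mul_rpow_one_sub_le {ι : Type*} (T : Finset ι) {A B : ι → ℝ}
    (hA : ∀ i ∈ T, 0 ≤ A i) (hB : ∀ i ∈ T, 0 ≤ B i) {θ : ℝ} (hθ₀ : 0 ≤ θ) (hθ₁ : θ ≤ 1) :
    ∑ i ∈ T, A i ^ θ * B i ^ (1 - θ) ≤ (∑ i ∈ T, A i) ^ θ * (∑ i ∈ T, B i) ^ (1 - θ) := by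
  rcases hθ₀.eq_or_lt with rfl | hθ₀
  · simp
  rcases hθ₁.eq_or_lt with rfl | hθ₁
  · simp
  have hconj : (θ⁻¹).HolderConjugate (1 - θ)⁻¹ :=
    Real.holderConjugate_iff.2 ⟨(one_lt_inv₀ hθ₀).2 hθ₁, by simp⟩
  have hA_rpow : ∑ i ∈ T, (A i ^ θ) ^ θ⁻¹ = ∑ i ∈ T, A i :=
    sum_congr rfl fun i hi ↦ Real.rpow_rpow_inv (hA i hi) hθ₀.ne'
  have hB_rpow : ∑ i ∈ T, (B i ^ (1 - θ)) ^ (1 - θ)⁻¹ = ∑ i ∈ T, B i :=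
    sum_congr rfl fun i hi ↦ Real.rpow_rpow_inv (hB i hi) (sub_pos.2 hθ₁).ne'
  have h := Real.inner_le_Lp_mul_Lq_of_nonneg T hconj (fun i hi ↦ Real.rpow_nonneg (hA i hi) θ)
    (fun i hi ↦ Real.rpow_nonneg (hB i hi) (1 - θ))
  rwa [hA_rpow, hB_rpow, one_div, one_div, inv_inv, inv_inv] at h

lemma rpow_mul_rpow_one_sub {x : ℝ} (hx : 0 ≤ x) (θ : ℝ) : x ^ θ * x ^ (1 - θ) = x := by
  rw [← Real.rpow_add' hx (by simp), add_sub_cancel, Real.rpow_one]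

lemma pow_rpow_mul_pow_rpow {x : ℝ} (hx : 0 ≤ x) {m₁ m₂ m : ℕ} {θ : ℝ} (hθ₀ : 0 ≤ θ)
    (hθ₁ : θ ≤ 1) (hm : θ * m₁ + (1 - θ) * m₂ = m) :
    (x ^ m₁) ^ θ * (x ^ m₂) ^ (1 - θ) = x ^ m := by
  have h₁ : 0 ≤ (m₁ : ℝ) * θ := by positivity
  have h₂ : 0 ≤ (m₂ : ℝ) * (1 - θ) := mul_nonneg m₂.cast_nonneg (sub_nonneg.2 hθ₁)
  rw [← Real.rpow_natCast_mul hx, ← Real.rpow_natCast_mul hx, ← Real.rpow_add_of_nonneg hx h₁ h₂,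
    ← Real.rpow_natCast, ← hm, mul_comm θ, mul_comm (1 - θ)]

end Holder

section ResidueClass

variable {N : ℕ}

/-- The part of the index set `S` lying in the residue class `c` modulo `N`. -/
def residueClass (N : ℕ) (c : ZMod N) (S : Finset ℤ) : Finset ℤ :=
  S.filter fun x ↦ (x : ZMod N) = c

lemma mem_residueClass {c : ZMod N} {S : Finset ℤ} {x : ℤ} :
    x ∈ residueClass N c S ↔ x ∈ S ∧ (x : ZMod N) = c := mem_filter

lemma residueClass_subset (c : ZMod N) (S : Finset ℤ) : residueClass N c S ⊆ S :=
  filter_subset _ _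

lemma dvd_sub_of_mem_residueClass {c x : ℤ} {S : Finset ℤ} (hx : x ∈ residueClass N c S) :
    (N : ℤ) ∣ x - c :=
  (ZMod.intCast_eq_intCast_iff_dvd_sub c x N).1 (mem_residueClass.1 hx).2.symm

lemma pow_dvd_sub_of_mem_residueClass {p b : ℕ} {η x : ℤ} {S : Finset ℤ}
    (hx : x ∈ residueClass (p ^ b) η S) : (p : ℤ) ^ b ∣ x - η := by
  exact_mod_cast dvd_sub_of_mem_residueClass hx

lemma residueClass_residueClass {M : ℕ} (h : M ∣ N) (c : ZMod M) (d : ℤ) (S : Finset ℤ) :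
    residueClass N d (residueClass M c S)
      = if (d : ZMod M) = c then residueClass N d S else ∅ := by
  have hcast {x : ℤ} (hx : (x : ZMod N) = d) : (x : ZMod M) = d := by
    simpa using congrArg (ZMod.castHom h (ZMod M)) hx
  split_ifs with hdc
  · ext x
    simp only [mem_residueClass, and_assoc]
    exact ⟨fun ⟨hS, _, hd⟩ ↦ ⟨hS, hd⟩, fun ⟨hS, hd⟩ ↦ ⟨hS, (hcast hd).trans hdc, hd⟩⟩
  · refine eq_empty_of_forall_notMem fun x hx ↦ hdc ?_
    simp only [mem_residueClass] at hx
    exact (hcast hx.2).symm.trans hx.1.2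

lemma exists_eq_image_affine {M ξ : ℤ} {S : Finset ℤ} (hS : ∀ x ∈ S, M ∣ x - ξ) :
    ∃ T : Finset ℤ, S = T.image fun u ↦ ξ + M * u := by
  refine ⟨S.image fun x ↦ (x - ξ) / M, ?_⟩
  rw [image_image]
  refine (image_id'.symm).trans (image_congr fun x hx ↦ ?_)
  simp only [Function.comp_apply, Int.mul_ediv_cancel' (hS x hx)]
  ring

lemma injective_affine {M : ℤ} (hM : M ≠ 0) (ξ : ℤ) : Function.Injective fun u ↦ ξ + M * u :=
  (add_right_injective ξ).comp (mul_right_injective₀ hM)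

lemma intCast_affine_inj {K M : ℕ} (hM : M ≠ 0) (hK : K = M * N) (ξ u v : ℤ) :
    ((ξ + M * u : ℤ) : ZMod K) = (ξ + M * v : ℤ) ↔ (u : ZMod N) = v := by
  subst hK
  rw [ZMod.intCast_eq_intCast_iff_dvd_sub, ZMod.intCast_eq_intCast_iff_dvd_sub,
    add_sub_add_left_eq_sub, ← mul_sub, Nat.cast_mul,
    mul_dvd_mul_iff_left (Int.natCast_ne_zero.2 hM)]

lemma residueClass_image_affine {K M : ℕ} (hM : M ≠ 0) (hK : K = M * N) (ξ c : ℤ)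
    (T : Finset ℤ) :
    residueClass K ((ξ + M * c : ℤ) : ZMod K) (T.image fun u ↦ ξ + (M : ℤ) * u)
      = (residueClass N c T).image fun u ↦ ξ + (M : ℤ) * u := by
  simp only [residueClass, filter_image, intCast_affine_inj hM hK]

end ResidueClass

section Moments

variable {Ω : Type*} {N s : ℕ}

/-- The exponential sum over the index set `S`, with the phases `f x` abstracted to arbitrary
functions on a parameter space `Ω`. -/
def expSum (f : ℤ → Ω → ℂ) (S : Finset ℤ) (ω : Ω) : ℂ := ∑ x ∈ S, f x ω

lemma expSum_empty (f : ℤ → Ω → ℂ) (ω : Ω) : expSum f ∅ ω = 0 := sum_empty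

lemma expSum_eq_sum_residueClass (N : ℕ) [NeZero N] (f : ℤ → Ω → ℂ) (S : Finset ℤ) (ω : Ω) :
    expSum f S ω = ∑ c, expSum f (residueClass N c S) ω :=
  (sum_fiberwise S _ _).symm

lemma expSum_image {e : ℤ → ℤ} (he : Function.Injective e) (f : ℤ → Ω → ℂ) (T : Finset ℤ)
    (ω : Ω) : expSum f (T.image e) ω = expSum (f ∘ e) T ω :=
  sum_image he.injOn

lemma norm_expSum_pow (f : ℤ → Ω → ℂ) (T : Finset ℤ) (t : ℕ) (ω : Ω) :
    ((‖expSum f T ω‖ ^ (2 * t) : ℝ) : ℂ) =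
      ∑ z ∈ Fintype.piFinset fun _ : Fin t ↦ T, ∑ z' ∈ Fintype.piFinset fun _ : Fin t ↦ T,
        (∏ i, f (z i) ω) * ∏ i, (starRingEnd ℂ) (f (z' i) ω) := by
  rw [pow_mul, ← Complex.normSq_eq_norm_sq, Complex.ofReal_pow, ← Complex.mul_conj, mul_pow,
    expSum, map_sum, sum_pow', sum_pow', sum_mul_sum]

variable [Fintype Ω] {w : Ω → ℝ} (f : ℤ → Ω → ℂ) (S : Finset ℤ)

/-- The `2s`-th moment of the exponential sum over `S`, for the weight `w` on the finite parameter
space. -/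
noncomputable def moment (s : ℕ) (w : Ω → ℝ) (f : ℤ → Ω → ℂ) (S : Finset ℤ) : ℝ :=
  ∑ ω, w ω * ‖expSum f S ω‖ ^ (2 * s)

/-- The square of the weighted `L^(2s)` norm of the exponential sum over `S`, for `s ≠ 0`. -/
noncomputable def sqNorm (s : ℕ) (w : Ω → ℝ) (f : ℤ → Ω → ℂ) (S : Finset ℤ) : ℝ :=
  moment s w f S ^ (s : ℝ)⁻¹

/-- The square function side of a decoupling inequality: the sum over all residue classes modulo
`N` of the squared `L^(2s)` norms of the exponential sums over these classes. -/
noncomputable def squareSum (N : ℕ) [NeZero N] (s : ℕ) (w : Ω → ℝ) (f : ℤ → Ω → ℂ)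
    (S : Finset ℤ) : ℝ :=
  ∑ c, sqNorm s w f (residueClass N c S)

lemma moment_nonneg (hw : 0 ≤ w) : 0 ≤ moment s w f S :=
  sum_nonneg fun ω _ ↦ mul_nonneg (hw ω) (by positivity)

lemma sqNorm_nonneg (hw : 0 ≤ w) : 0 ≤ sqNorm s w f S := Real.rpow_nonneg (moment_nonneg f S hw) _

lemma squareSum_nonneg [NeZero N] (hw : 0 ≤ w) : 0 ≤ squareSum N s w f S :=
  sum_nonneg fun _ _ ↦ sqNorm_nonneg f _ hw

lemma sqNorm_pow (hs : s ≠ 0) (hw : 0 ≤ w) : sqNorm s w f S ^ s = moment s w f S :=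
  Real.rpow_inv_natCast_pow (moment_nonneg f S hw) hs

lemma sqNorm_empty (hs : s ≠ 0) (w : Ω → ℝ) : sqNorm s w f ∅ = 0 := by
  simp [sqNorm, moment, expSum_empty, hs]

lemma sqNorm_le_of_moment_le_pow (hs : s ≠ 0) (hw : 0 ≤ w) {r : ℝ} (hr : 0 ≤ r)
    (h : moment s w f S ≤ r ^ s) : sqNorm s w f S ≤ r := by
  rw [← sqNorm_pow f S hs hw] at h
  exact le_of_pow_le_pow_left₀ hs hr h

lemma sum_squareSum_residueClass {M : ℕ} [NeZero M] [NeZero N] (h : M ∣ N) (hs : s ≠ 0)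
    (w : Ω → ℝ) : ∑ c, squareSum N s w f (residueClass M c S) = squareSum N s w f S := by
  unfold squareSum
  rw [sum_comm]
  refine sum_congr rfl fun d _ ↦ ?_
  obtain ⟨d, rfl⟩ := ZMod.intCast_surjective d
  simp only [residueClass_residueClass h, apply_ite, sqNorm_empty f hs w]
  exact sum_ite_eq_of_mem _ _ _ (mem_univ _)

lemma squareSum_residueClass_le {M : ℕ} [NeZero M] [NeZero N] (h : M ∣ N) (hs : s ≠ 0)
    (hw : 0 ≤ w) (c : ZMod M) : squareSum N s w f (residueClass M c S) ≤ squareSum N s w f S := by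
  rw [← sum_squareSum_residueClass f S h hs]
  exact single_le_sum (f := fun c ↦ squareSum N s w f (residueClass M c S))
    (fun _ _ ↦ squareSum_nonneg f _ hw) (mem_univ c)

lemma moment_image {e : ℤ → ℤ} (he : Function.Injective e) (s : ℕ) (w : Ω → ℝ) (T : Finset ℤ) :
    moment s w f (T.image e) = moment s w (f ∘ e) T := by
  simp only [moment, expSum_image he]

lemma squareSum_comp_affine_le {K M : ℕ} [NeZero K] [NeZero N] (hM : M ≠ 0) (hK : K = M * N)
    (hw : 0 ≤ w) (ξ : ℤ) (T : Finset ℤ) :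
    squareSum N s w (f ∘ fun u ↦ ξ + (M : ℤ) * u) T
      ≤ squareSum K s w f (T.image fun u ↦ ξ + (M : ℤ) * u) := by
  have he := injective_affine (Int.natCast_ne_zero.2 hM) ξ
  obtain ⟨lift, hlift⟩ := (ZMod.intCast_surjective (n := N)).hasRightInverse
  have hinj : Function.Injective fun c ↦ ((ξ + M * lift c : ℤ) : ZMod K) := fun c d hcd ↦ by
    simpa only [hlift _] using (intCast_affine_inj hM hK ξ (lift c) (lift d)).1 hcd
  calc squareSum N s w (f ∘ fun u ↦ ξ + (M : ℤ) * u) T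
      = ∑ c : ZMod N, sqNorm s w f (residueClass K ((ξ + M * lift c : ℤ) : ZMod K)
          (T.image fun u ↦ ξ + (M : ℤ) * u)) :=
        sum_congr rfl fun c _ ↦ by
          rw [residueClass_image_affine hM hK, sqNorm, sqNorm, moment_image f he, hlift]
    _ = ∑ d ∈ univ.image fun c ↦ ((ξ + M * lift c : ℤ) : ZMod K),
          sqNorm s w f (residueClass K d (T.image fun u ↦ ξ + (M : ℤ) * u)) :=
        by rw [sum_image hinj.injOn]
    _ ≤ squareSum K s w f (T.image fun u ↦ ξ + (M : ℤ) * u) :=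
        sum_le_univ_sum_of_nonneg fun _ ↦ sqNorm_nonneg f _ hw

end Moments

section MixedMoment

variable {Ω : Type*} [Fintype Ω] {w : Ω → ℝ} {g h : Ω → ℂ}

/-- The mixed moment of order `(2m, 2n)` of a pair of functions on a weighted finite space. -/
noncomputable def mixedMoment (m n : ℕ) (w : Ω → ℝ) (g h : Ω → ℂ) : ℝ :=
  ∑ ω, w ω * (‖g ω‖ ^ (2 * m) * ‖h ω‖ ^ (2 * n))

lemma mixedMoment_comm (m n : ℕ) (w : Ω → ℝ) (g h : Ω → ℂ) :
    mixedMoment m n w g h = mixedMoment n m w h g := by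
  simp only [mixedMoment, mul_comm]

lemma mixedMoment_nonneg (m n : ℕ) (hw : 0 ≤ w) (g h : Ω → ℂ) : 0 ≤ mixedMoment m n w g h :=
  sum_nonneg fun ω _ ↦ mul_nonneg (hw ω) (by positivity)

lemma mixedMoment_expSum_zero_right (m : ℕ) (w : Ω → ℝ) (f : ℤ → Ω → ℂ) (S : Finset ℤ)
    (h : Ω → ℂ) : mixedMoment m 0 w (expSum f S) h = moment m w f S := by
  simp [mixedMoment, moment]

lemma mixedMoment_expSum_zero_left (n : ℕ) (w : Ω → ℝ) (g : Ω → ℂ) (f : ℤ → Ω → ℂ)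
    (S : Finset ℤ) : mixedMoment 0 n w g (expSum f S) = moment n w f S := by
  rw [mixedMoment_comm, mixedMoment_expSum_zero_right]

lemma mixedMoment_expSum_left (m n : ℕ) (w : Ω → ℝ) (f : ℤ → Ω → ℂ) (S : Finset ℤ) (h : Ω → ℂ) :
    mixedMoment m n w (expSum f S) h = moment m (fun ω ↦ w ω * ‖h ω‖ ^ (2 * n)) f S :=
  sum_congr rfl fun ω _ ↦ by ring

lemma mul_pow_mul_pow_interpolate {m₁ m₂ m n₁ n₂ n : ℕ} {θ : ℝ} (hθ₀ : 0 ≤ θ) (hθ₁ : θ ≤ 1)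
    (hm : θ * m₁ + (1 - θ) * m₂ = m) (hn : θ * n₁ + (1 - θ) * n₂ = n) {u v x y : ℝ}
    (hu : 0 ≤ u) (hv : 0 ≤ v) (hx : 0 ≤ x) (hy : 0 ≤ y) :
    (u * (x ^ m₁ * y ^ n₁)) ^ θ * (v * (x ^ m₂ * y ^ n₂)) ^ (1 - θ)
      = u ^ θ * v ^ (1 - θ) * (x ^ m * y ^ n) := by
  rw [Real.mul_rpow hu (by positivity), Real.mul_rpow (by positivity) (by positivity),
    Real.mul_rpow hv (by positivity), Real.mul_rpow (by positivity) (by positivity),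
    ← pow_rpow_mul_pow_rpow hx hθ₀ hθ₁ hm, ← pow_rpow_mul_pow_rpow hy hθ₀ hθ₁ hn]
  ring

lemma mixedMoment_interpolate (hw : 0 ≤ w) (g h : Ω → ℂ) {m₁ m₂ m n₁ n₂ n : ℕ} {θ : ℝ}
    (hθ₀ : 0 ≤ θ) (hθ₁ : θ ≤ 1) (hm : θ * m₁ + (1 - θ) * m₂ = m)
    (hn : θ * n₁ + (1 - θ) * n₂ = n) :
    mixedMoment m n w g h ≤ mixedMoment m₁ n₁ w g h ^ θ * mixedMoment m₂ n₂ w g h ^ (1 - θ) := by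
  have hterm (ω : Ω) : w ω * (‖g ω‖ ^ (2 * m) * ‖h ω‖ ^ (2 * n))
      = (w ω * (‖g ω‖ ^ (2 * m₁) * ‖h ω‖ ^ (2 * n₁))) ^ θ
        * (w ω * (‖g ω‖ ^ (2 * m₂) * ‖h ω‖ ^ (2 * n₂))) ^ (1 - θ) := by
    simp only [pow_mul]
    rw [mul_pow_mul_pow_interpolate hθ₀ hθ₁ hm hn (hw ω) (hw ω) (by positivity) (by positivity),
      rpow_mul_rpow_one_sub (hw ω)]
  have hnonneg (a b : ℕ) (ω : Ω) : 0 ≤ w ω * (‖g ω‖ ^ (2 * a) * ‖h ω‖ ^ (2 * b)) :=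
    mul_nonneg (hw ω) (by positivity)
  rw [mixedMoment, sum_congr rfl fun ω _ ↦ hterm ω]
  exact sum_rpow_mul_rpow_one_sub_le univ (fun ω _ ↦ hnonneg _ _ ω) (fun ω _ ↦ hnonneg _ _ ω)
    hθ₀ hθ₁

lemma mixedMoment_le_of_interpolate (hw : 0 ≤ w) {m₁ m₂ m n₁ n₂ n : ℕ} {θ : ℝ}
    (hθ₀ : 0 ≤ θ) (hθ₁ : θ ≤ 1) (hm : θ * m₁ + (1 - θ) * m₂ = m)
    (hn : θ * n₁ + (1 - θ) * n₂ = n) {K₁ K₂ P Q : ℝ} (hK₁ : 0 ≤ K₁) (hK₂ : 0 ≤ K₂)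
    (hP : 0 ≤ P) (hQ : 0 ≤ Q) (h₁ : mixedMoment m₁ n₁ w g h ≤ K₁ * (P ^ m₁ * Q ^ n₁))
    (h₂ : mixedMoment m₂ n₂ w g h ≤ K₂ * (P ^ m₂ * Q ^ n₂)) :
    mixedMoment m n w g h ≤ K₁ ^ θ * K₂ ^ (1 - θ) * (P ^ m * Q ^ n) := by
  have : 0 ≤ 1 - θ := sub_nonneg.2 hθ₁
  have h₁₀ := mixedMoment_nonneg m₁ n₁ hw g h
  have h₂₀ := mixedMoment_nonneg m₂ n₂ hw g h
  calc mixedMoment m n w g h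
      ≤ mixedMoment m₁ n₁ w g h ^ θ * mixedMoment m₂ n₂ w g h ^ (1 - θ) :=
        mixedMoment_interpolate hw g h hθ₀ hθ₁ hm hn
    _ ≤ (K₁ * (P ^ m₁ * Q ^ n₁)) ^ θ * (K₂ * (P ^ m₂ * Q ^ n₂)) ^ (1 - θ) := by gcongr
    _ = K₁ ^ θ * K₂ ^ (1 - θ) * (P ^ m * Q ^ n) :=
        mul_pow_mul_pow_interpolate hθ₀ hθ₁ hm hn hK₁ hK₂ hP hQ

end MixedMoment

section Orthogonality

variable {Ω : Type*} [Fintype Ω] {R : Type*} [CommRing R] {k s t : ℕ}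

/-- The mean value of `f x₁ ⋯ f xₛ * conj (f y₁ ⋯ f yₛ)` against the weight `w`; expanding the
`2s`-th moment of an exponential sum produces these. -/
def correlation (w : Ω → ℝ) (f : ℤ → Ω → ℂ) (x y : Fin s → ℤ) : ℂ :=
  ∑ ω, (w ω : ℂ) * ((∏ i, f (x i) ω) * ∏ i, (starRingEnd ℂ) (f (y i) ω))

/-- The phases `f x`, `x ∈ S`, behave like characters of the curve `φ` at resolution `d`: only
solutions modulo `d` of the system attached to `φ` contribute to their moments of order `2s`. -/
def OrthogonalMod (s : ℕ) (d : R) (φ : Fin k → R[X]) (w : Ω → ℝ) (S : Finset ℤ)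
    (f : ℤ → Ω → ℂ) : Prop :=
  ∀ x y : Fin s → ℤ, (∀ i, x i ∈ S) → (∀ i, y i ∈ S) → correlation w f x y ≠ 0 →
    SolvesMod d φ x y

lemma OrthogonalMod.mono {d : R} {φ : Fin k → R[X]} {w : Ω → ℝ} {S T : Finset ℤ}
    {f : ℤ → Ω → ℂ} (h : OrthogonalMod s d φ w S f) (hT : T ⊆ S) : OrthogonalMod s d φ w T f :=
  fun x y hx hy ↦ h x y (fun i ↦ hT (hx i)) (fun i ↦ hT (hy i))

lemma correlation_mul_norm_expSum_pow (w : Ω → ℝ) (f : ℤ → Ω → ℂ) (T : Finset ℤ) (t : ℕ)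
    (x y : Fin s → ℤ) :
    correlation (fun ω ↦ w ω * ‖expSum f T ω‖ ^ (2 * t)) f x y =
      ∑ z ∈ Fintype.piFinset fun _ : Fin t ↦ T, ∑ z' ∈ Fintype.piFinset fun _ : Fin t ↦ T,
        correlation w f (Fin.append x z) (Fin.append y z') := by
  have hterm (ω : Ω) : ((w ω * ‖expSum f T ω‖ ^ (2 * t) : ℝ) : ℂ) *
      ((∏ i, f (x i) ω) * ∏ i, (starRingEnd ℂ) (f (y i) ω)) =
      ∑ z ∈ Fintype.piFinset fun _ : Fin t ↦ T, ∑ z' ∈ Fintype.piFinset fun _ : Fin t ↦ T,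
        (w ω : ℂ) * ((∏ i, f (Fin.append x z i) ω) *
          ∏ i, (starRingEnd ℂ) (f (Fin.append y z' i) ω)) := by
    simp only [Complex.ofReal_mul, norm_expSum_pow, mul_sum, sum_mul, Fin.prod_univ_add,
      Fin.append_left, Fin.append_right]
    exact sum_congr rfl fun z _ ↦ sum_congr rfl fun z' _ ↦ by ring
  simp only [correlation, hterm]
  rw [sum_comm]
  exact sum_congr rfl fun z _ ↦ sum_comm

lemma OrthogonalMod.exists_append {d : R} {φ : Fin k → R[X]} {w : Ω → ℝ} {S I J : Finset ℤ}
    {f : ℤ → Ω → ℂ} (ho : OrthogonalMod (s + t) d φ w S f) (hI : I ⊆ S) (hJ : J ⊆ S)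
    {x y : Fin s → ℤ} (hx : ∀ i, x i ∈ I) (hy : ∀ i, y i ∈ I)
    (hne : correlation (fun ω ↦ w ω * ‖expSum f J ω‖ ^ (2 * t)) f x y ≠ 0) :
    ∃ z z' : Fin t → ℤ, (∀ i, z i ∈ J) ∧ (∀ i, z' i ∈ J) ∧
      SolvesMod d φ (Fin.append x z) (Fin.append y z') := by
  have happend {x : Fin s → ℤ} {z : Fin t → ℤ} (hx : ∀ i, x i ∈ I) (hz : ∀ i, z i ∈ J)
      (i : Fin (s + t)) : Fin.append x z i ∈ S :=
    Fin.addCases (fun i ↦ by simpa using hI (hx i)) (fun i ↦ by simpa using hJ (hz i)) i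
  rw [correlation_mul_norm_expSum_pow] at hne
  obtain ⟨z, hz, hne⟩ := exists_ne_zero_of_sum_ne_zero hne
  obtain ⟨z', hz', hne⟩ := exists_ne_zero_of_sum_ne_zero hne
  rw [Fintype.mem_piFinset] at hz hz'
  exact ⟨z, z', hz, hz', ho _ _ (happend hx hz) (happend hy hz') hne⟩

end Orthogonality

section Triangle

/-- The critical exponent `k (k + 1) / 2` of the Vinogradov system of degree `k`. -/
def triangle (k : ℕ) : ℕ := k * (k + 1) / 2

lemma two_mul_triangle (k : ℕ) : 2 * triangle k = k * (k + 1) :=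
  Nat.mul_div_cancel' (Nat.even_mul_succ_self k).two_dvd

lemma cast_triangle (k : ℕ) : (triangle k : ℝ) = k * (k + 1) / 2 :=
  eq_div_of_mul_eq two_ne_zero (by rw [mul_comm]; exact_mod_cast two_mul_triangle k)

lemma triangle_strictMono : StrictMono triangle :=
  strictMono_nat_of_lt_succ fun k ↦ by
    linarith [two_mul_triangle k, two_mul_triangle (k + 1)]

lemma triangle_pos {k : ℕ} (hk : 0 < k) : 0 < triangle k :=
  (Nat.zero_le _).trans_lt (triangle_strictMono hk)

end Triangle

section Decoupling

variable {p : ℕ} [Fact p.Prime]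

/-- The `ℓ²` decoupling inequality at the critical exponent, from scale `1` down to scale `p ^ n`,
with constant `D`. -/
def Decoupling (p : ℕ) [Fact p.Prime] (k n : ℕ) (D : ℝ) : Prop :=
  ∀ ⦃Ω : Type⦄ [Fintype Ω] ⦃φ : Fin k → ℤ_[p][X]⦄ ⦃w : Ω → ℝ⦄ ⦃S : Finset ℤ⦄ ⦃f : ℤ → Ω → ℂ⦄,
    ReducesToMomentCurve φ → 0 ≤ w →
    OrthogonalMod (triangle k) ((p : ℤ_[p]) ^ (k * n)) φ w S f →
    moment (triangle k) w f S ≤ D * squareSum (p ^ n) (triangle k) w f S ^ triangle k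

/-- The bilinear decoupling inequality with constant `K`, for a pair of classes modulo `p ^ a` and
`p ^ b` that are distinct modulo `p`. The parameter `l` records how the critical exponent is
distributed over the two classes. -/
def BilinearDecoupling (p : ℕ) [Fact p.Prime] (k l n a b : ℕ) (K : ℝ) : Prop :=
  ∀ ⦃Ω : Type⦄ [Fintype Ω] ⦃φ : Fin k → ℤ_[p][X]⦄ ⦃w : Ω → ℝ⦄ ⦃S : Finset ℤ⦄ ⦃f : ℤ → Ω → ℂ⦄,
    ReducesToMomentCurve φ → 0 ≤ w →
    OrthogonalMod (triangle k) ((p : ℤ_[p]) ^ (k * n)) φ w S f →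
    ∀ ⦃ξ η : ℤ⦄, ¬ (p : ℤ) ∣ ξ - η →
    mixedMoment (triangle l) (triangle k - triangle l) w
        (expSum f (residueClass (p ^ a) ξ S)) (expSum f (residueClass (p ^ b) η S))
      ≤ K * (squareSum (p ^ n) (triangle k) w f (residueClass (p ^ a) ξ S) ^ triangle l
        * squareSum (p ^ n) (triangle k) w f (residueClass (p ^ b) η S)
          ^ (triangle k - triangle l))

lemma Decoupling.mono {k n : ℕ} {D D' : ℝ} (h : Decoupling p k n D) (hD : D ≤ D') :
    Decoupling p k n D' := fun _ _ _ _ S f hφ hw ho ↦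
  (h hφ hw ho).trans
    (mul_le_mul_of_nonneg_right hD (pow_nonneg (squareSum_nonneg f S hw) _))

lemma BilinearDecoupling.mono {k l n a b : ℕ} {K K' : ℝ} (h : BilinearDecoupling p k l n a b K)
    (hK : K ≤ K') : BilinearDecoupling p k l n a b K' := fun _ _ _ _ _ f hφ hw ho _ _ hne ↦
  (h hφ hw ho hne).trans (mul_le_mul_of_nonneg_right hK
    (mul_nonneg (pow_nonneg (squareSum_nonneg f _ hw) _) (pow_nonneg (squareSum_nonneg f _ hw) _)))

/-- The phase scaling `p ^ (a * (j + 1))` of the rescaled curve costs at most the factor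
`p ^ (l * a)` of the modulus. -/
lemma OrthogonalMod.rescale {l m a s : ℕ} {Ω : Type*} [Fintype Ω] {ψ χ : Fin l → ℤ_[p][X]} {ξ : ℤ}
    {w : Ω → ℝ} {T : Finset ℤ} {f : ℤ → Ω → ℂ}
    (hχ : ∀ (x y : Fin s → ℤ) (d : ℤ_[p]),
      SolvesMod d ψ (fun t ↦ ξ + (p : ℤ) ^ a * x t) (fun t ↦ ξ + (p : ℤ) ^ a * y t) →
      ∀ j : Fin l, d ∣ (p : ℤ_[p]) ^ (a * (j.val + 1)) *
        ∑ t, ((χ j).eval (x t : ℤ_[p]) - (χ j).eval (y t : ℤ_[p])))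
    (ho : OrthogonalMod s ((p : ℤ_[p]) ^ (l * (a + m))) ψ w
      (T.image fun u ↦ ξ + (p : ℤ) ^ a * u) f) :
    OrthogonalMod s ((p : ℤ_[p]) ^ (l * m)) χ w T (f ∘ fun u ↦ ξ + (p : ℤ) ^ a * u) := by
  intro x y hx hy hne j
  have hdvd := hχ x y _ (ho _ _ (fun i ↦ mem_image_of_mem _ (hx i))
    (fun i ↦ mem_image_of_mem _ (hy i)) hne) j
  have hexp : a * (j.val + 1) + l * m ≤ l * (a + m) := by nlinarith [j.2]
  have hpow := (pow_dvd_pow (p : ℤ_[p]) hexp).trans hdvd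
  rw [pow_add] at hpow
  exact (mul_dvd_mul_iff_left (pow_ne_zero _ PadicInt.prime_p.ne_zero)).1 hpow

lemma Decoupling.moment_le_of_dvd_sub {l m a : ℕ} {D : ℝ} (h : Decoupling p l m D) (hD : 0 ≤ D)
    (ha : a ≠ 0) {Ω : Type} [Fintype Ω] {ψ : Fin l → ℤ_[p][X]} {ξ : ℤ}
    (hdet : IsUnit (taylorMatrix ψ (ξ : ℤ_[p])).det) {w : Ω → ℝ} (hw : 0 ≤ w) {S : Finset ℤ}
    (hS : ∀ x ∈ S, (p : ℤ) ^ a ∣ x - ξ) {f : ℤ → Ω → ℂ}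
    (ho : OrthogonalMod (triangle l) ((p : ℤ_[p]) ^ (l * (a + m))) ψ w S f) :
    moment (triangle l) w f S ≤ D * squareSum (p ^ (a + m)) (triangle l) w f S ^ triangle l := by
  obtain ⟨χ, hχ, hψχ⟩ := exists_rescaled_curve ψ ξ hdet ha
  obtain ⟨T, rfl⟩ := exists_eq_image_affine hS
  have hpa : p ^ a ≠ 0 := pow_ne_zero _ (Fact.out : p.Prime).ne_zero
  have hinj : Function.Injective fun u : ℤ ↦ ξ + (p : ℤ) ^ a * u :=
    injective_affine (by exact_mod_cast hpa) ξ
  have hsq := squareSum_comp_affine_le (s := triangle l) f hpa (pow_add p a m) hw ξ T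
  push_cast at hsq
  calc moment (triangle l) w f (T.image fun u ↦ ξ + (p : ℤ) ^ a * u)
      = moment (triangle l) w (f ∘ fun u ↦ ξ + (p : ℤ) ^ a * u) T := moment_image f hinj _ _ T
    _ ≤ D * squareSum (p ^ m) (triangle l) w (f ∘ fun u ↦ ξ + (p : ℤ) ^ a * u) T ^ triangle l :=
        h hχ hw (ho.rescale (hψχ _))
    _ ≤ _ := mul_le_mul_of_nonneg_left
        (pow_le_pow_left₀ (squareSum_nonneg _ T hw) hsq _) hD

lemma Decoupling.moment_residueClass_le {k n b : ℕ} {D : ℝ} (h : Decoupling p k (n - b) D)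
    (hD : 0 ≤ D) (hb : b ≠ 0) (hbn : b ≤ n) {Ω : Type} [Fintype Ω] {φ : Fin k → ℤ_[p][X]}
    (hφ : ReducesToMomentCurve φ) {w : Ω → ℝ} (hw : 0 ≤ w) {S : Finset ℤ} {f : ℤ → Ω → ℂ}
    (ho : OrthogonalMod (triangle k) ((p : ℤ_[p]) ^ (k * n)) φ w S f) (η : ℤ) :
    moment (triangle k) w f (residueClass (p ^ b) η S)
      ≤ D * squareSum (p ^ n) (triangle k) w f (residueClass (p ^ b) η S) ^ triangle k := by
  have hn : b + (n - b) = n := Nat.add_sub_cancel' hbn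
  have h' := h.moment_le_of_dvd_sub hD hb (S := residueClass (p ^ b) η S) (f := f)
    (hφ.isUnit_det_taylorMatrix η) hw (fun x hx ↦ pow_dvd_sub_of_mem_residueClass hx)
  rw [hn] at h'
  exact h' (ho.mono (residueClass_subset _ _))

/-- The last `l` coordinates of the normal form of `φ` at `η` are divisible by `p ^ e` on the
class of `η` modulo `p ^ b`, so the exponential sum over that class acts as a mere weight and the
system drops from dimension `k` to dimension `l`. -/
lemma exists_orthogonalMod_mul_norm_expSum {k l s t b e : ℕ} (hlk : l ≤ k) (hkp : k < p)
    {Ω : Type*} [Fintype Ω] {φ : Fin k → ℤ_[p][X]} (hφ : ReducesToMomentCurve φ) {ξ η : ℤ}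
    (hne : ¬ (p : ℤ) ∣ ξ - η) {d : ℤ_[p]} {w : Ω → ℝ} {S I J : Finset ℤ} {f : ℤ → Ω → ℂ}
    (ho : OrthogonalMod (s + t) d φ w S f) (hI : I ⊆ S) (hJ : J ⊆ S)
    (hJη : ∀ x ∈ J, (p : ℤ) ^ b ∣ x - η) (hd : (p : ℤ_[p]) ^ e ∣ d) (he : e ≤ b * (k - l + 1)) :
    ∃ ψ : Fin l → ℤ_[p][X], IsUnit (taylorMatrix ψ (ξ : ℤ_[p])).det ∧
      OrthogonalMod s ((p : ℤ_[p]) ^ e) ψ (fun ω ↦ w ω * ‖expSum f J ω‖ ^ (2 * t)) I f := by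
  obtain ⟨θ, hθ_map, hθ_dvd, hθ_solves⟩ := hφ.exists_normalForm η
  have hlast (i : Fin l) : k - l + i.val < k := by omega
  refine ⟨fun i ↦ θ ⟨k - l + i.val, hlast i⟩,
    isUnit_det_taylorMatrix_of_map_eq_taylor (by omega) _ hne fun i ↦ hθ_map _, ?_⟩
  intro x y hx hy hcorr j
  obtain ⟨z, z', hz, hz', hsol⟩ := ho.exists_append hI hJ hx hy hcorr
  have hsum := hd.trans (hθ_solves _ _ _ _ hsol ⟨k - l + j.val, hlast j⟩)
  rw [Fin.sum_univ_add] at hsum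
  simp only [Fin.append_left, Fin.append_right] at hsum
  have hz_dvd {z : ℤ} (hz : z ∈ J) :
      (p : ℤ_[p]) ^ e ∣ (θ ⟨k - l + j.val, hlast j⟩).eval (z : ℤ_[p]) :=
    (pow_dvd_pow _ (he.trans (Nat.mul_le_mul_left b (by simp)))).trans (hθ_dvd _ b z (hJη z hz))
  exact (dvd_add_left (dvd_sum fun i _ ↦ dvd_sub (hz_dvd (hz i)) (hz_dvd (hz' i)))).1 hsum

lemma BilinearDecoupling.squareSum_le {k l n a a' b : ℕ} {K : ℝ}
    (h : BilinearDecoupling p k l n a' b K) (hK : 0 ≤ K) (hl : 0 < l) (ha : a ≠ 0) (haa' : a ≤ a')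
    (ha'n : a' ≤ n) {Ω : Type} [Fintype Ω] {φ : Fin k → ℤ_[p][X]} (hφ : ReducesToMomentCurve φ)
    {w : Ω → ℝ} (hw : 0 ≤ w) {S : Finset ℤ} {f : ℤ → Ω → ℂ} (hlk : l < k)
    (ho : OrthogonalMod (triangle k) ((p : ℤ_[p]) ^ (k * n)) φ w S f) {ξ η : ℤ}
    (hne : ¬ (p : ℤ) ∣ ξ - η) :
    squareSum (p ^ a') (triangle l)
        (fun ω ↦ w ω * ‖expSum f (residueClass (p ^ b) η S) ω‖ ^ (2 * (triangle k - triangle l)))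
        f (residueClass (p ^ a) ξ S)
      ≤ (K * squareSum (p ^ n) (triangle k) w f (residueClass (p ^ b) η S)
            ^ (triangle k - triangle l)) ^ (triangle l : ℝ)⁻¹
        * squareSum (p ^ n) (triangle k) w f (residueClass (p ^ a) ξ S) := by
  have htl := (triangle_pos hl).ne'
  have hKq : 0 ≤ K * squareSum (p ^ n) (triangle k) w f (residueClass (p ^ b) η S)
      ^ (triangle k - triangle l) := mul_nonneg hK (pow_nonneg (squareSum_nonneg f _ hw) _)
  rw [← sum_squareSum_residueClass f (residueClass (p ^ a) ξ S) (pow_dvd_pow p ha'n)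
    (triangle_pos (hl.trans hlk)).ne', mul_sum]
  refine sum_le_sum fun c _ ↦ ?_
  obtain ⟨c, rfl⟩ := ZMod.intCast_surjective c
  rw [residueClass_residueClass (pow_dvd_pow p haa')]
  split_ifs with hc
  · have hcη : ¬ (p : ℤ) ∣ c - η := fun hcη ↦ hne <| by
      rw [eq_comm, ZMod.intCast_eq_intCast_iff_dvd_sub, Nat.cast_pow] at hc
      simpa using dvd_sub hcη ((dvd_pow_self _ ha).trans hc)
    refine sqNorm_le_of_moment_le_pow f _ htl (fun ω ↦ mul_nonneg (hw ω) (by positivity))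
      (mul_nonneg (Real.rpow_nonneg hKq _) (squareSum_nonneg f _ hw)) ?_
    rw [mul_pow, Real.rpow_inv_natCast_pow hKq htl, ← mixedMoment_expSum_left]
    exact (h hφ hw ho hcη).trans_eq (by ring)
  · rw [sqNorm_empty f htl]
    exact mul_nonneg (Real.rpow_nonneg hKq _) (squareSum_nonneg f _ hw)

lemma BilinearDecoupling.coarsen {k l n a a' b : ℕ} {D K : ℝ}
    (h : BilinearDecoupling p k l n a' b K) (hdec : Decoupling p l (a' - a) D) (hD : 0 ≤ D)
    (hK : 0 ≤ K) (hl : 0 < l) (hlk : l < k) (hkp : k < p) (ha : a ≠ 0) (haa' : a ≤ a')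
    (ha'n : a' ≤ n) (hla' : l * a' ≤ b * (k - l + 1)) :
    BilinearDecoupling p k l n a b (D * K) := by
  intro Ω _ φ w S f hφ hw ho ξ η hne
  have htlk : triangle l + (triangle k - triangle l) = triangle k :=
    Nat.add_sub_cancel' (triangle_strictMono hlk).le
  set I := residueClass (p ^ a) ξ S
  set J := residueClass (p ^ b) η S
  set w' : Ω → ℝ := fun ω ↦ w ω * ‖expSum f J ω‖ ^ (2 * (triangle k - triangle l))
  have hw' : 0 ≤ w' := fun ω ↦ mul_nonneg (hw ω) (by positivity)
  obtain ⟨ψ, hdet, hψ⟩ := exists_orthogonalMod_mul_norm_expSum hlk.le hkp hφ hne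
    (htlk.symm ▸ ho) (residueClass_subset _ S) (residueClass_subset _ S)
    (fun x hx ↦ pow_dvd_sub_of_mem_residueClass hx)
    (pow_dvd_pow _ (Nat.mul_le_mul hlk.le ha'n)) hla'
  have hmoment := hdec.moment_le_of_dvd_sub (f := f) (S := I) hD ha hdet hw'
    fun x hx ↦ pow_dvd_sub_of_mem_residueClass hx
  rw [Nat.add_sub_cancel' haa'] at hmoment
  have hsq := h.squareSum_le hK hl ha haa' ha'n hφ hw hlk ho hne
  have hKq : 0 ≤ K * squareSum (p ^ n) (triangle k) w f J ^ (triangle k - triangle l) :=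
    mul_nonneg hK (pow_nonneg (squareSum_nonneg f _ hw) _)
  rw [mixedMoment_expSum_left]
  calc moment (triangle l) w' f I
      ≤ D * squareSum (p ^ a') (triangle l) w' f I ^ triangle l := hmoment hψ
    _ ≤ D * ((K * squareSum (p ^ n) (triangle k) w f J ^ (triangle k - triangle l))
          ^ (triangle l : ℝ)⁻¹ * squareSum (p ^ n) (triangle k) w f I) ^ triangle l :=
        mul_le_mul_of_nonneg_left (pow_le_pow_left₀ (squareSum_nonneg f I hw') hsq _) hD
    _ = _ := by
        rw [mul_pow, Real.rpow_inv_natCast_pow hKq (triangle_pos hl).ne']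
        ring

lemma BilinearDecoupling.interpolate {k l n a b : ℕ} (hl : 0 < l) (hlk : l < k) {K₁ K₂ : ℝ}
    (hK₁ : 0 ≤ K₁) (hK₂ : 0 ≤ K₂) (h₁ : BilinearDecoupling p k (k - l) n b a K₁)
    (h₂ : BilinearDecoupling p k (l - 1) n a b K₂) :
    BilinearDecoupling p k l n a b
      (K₁ ^ (1 / ((k : ℝ) - l + 1)) * K₂ ^ (1 - 1 / ((k : ℝ) - l + 1))) := by
  intro Ω _ φ w S f hφ hw ho ξ η hne
  have hne' : ¬ (p : ℤ) ∣ η - ξ := by rwa [dvd_sub_comm]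
  have hlk' : (l : ℝ) + 1 ≤ k := by exact_mod_cast hlk
  have hden : (0 : ℝ) < (k : ℝ) - l + 1 := by linarith
  have htri {m : ℕ} (hm : m ≤ k) : ((triangle k - triangle m : ℕ) : ℝ) = triangle k - triangle m :=
    Nat.cast_sub (triangle_strictMono.monotone hm)
  refine mixedMoment_le_of_interpolate hw (m₁ := triangle k - triangle (k - l))
    (n₁ := triangle (k - l)) (m₂ := triangle (l - 1)) (n₂ := triangle k - triangle (l - 1))
    (by positivity) ((div_le_one hden).2 (by linarith)) ?_ ?_ hK₁ hK₂
    (squareSum_nonneg f _ hw) (squareSum_nonneg f _ hw) ?_ (h₂ hφ hw ho hne)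
  · rw [htri (by omega)]
    simp only [cast_triangle, Nat.cast_sub hlk.le, Nat.cast_pred hl]
    field_simp
    ring
  · rw [htri (by omega), htri hlk.le]
    simp only [cast_triangle, Nat.cast_sub hlk.le, Nat.cast_pred hl]
    field_simp
    ring
  · rw [mixedMoment_comm]
    exact (h₁ hφ hw ho hne').trans_eq (by ring)

lemma Decoupling.bilinearDecoupling_zero {k n a b : ℕ} {D : ℝ} (h : Decoupling p k (n - b) D)
    (hD : 0 ≤ D) (hb : b ≠ 0) (hbn : b ≤ n) : BilinearDecoupling p k 0 n a b D := by
  intro Ω _ φ w S f hφ hw ho ξ η _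
  have htri : triangle 0 = 0 := rfl
  simpa only [htri, Nat.sub_zero, pow_zero, one_mul, mixedMoment_expSum_zero_left] using
    h.moment_residueClass_le hD hb hbn hφ hw ho η

lemma Decoupling.bilinearDecoupling {k l n a b : ℕ} {D : ℝ} (ha : Decoupling p k (n - a) D)
    (hb : Decoupling p k (n - b) D) (hD : 0 ≤ D) (hk : 0 < k) (hlk : l ≤ k) (ha₀ : a ≠ 0)
    (han : a ≤ n) (hb₀ : b ≠ 0) (hbn : b ≤ n) : BilinearDecoupling p k l n a b D := by
  intro Ω _ φ w S f hφ hw ho ξ η _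
  have htk : (0 : ℝ) < triangle k := Nat.cast_pos.2 (triangle_pos hk)
  have htlk : triangle l ≤ triangle k := triangle_strictMono.monotone hlk
  have hθ : (triangle l : ℝ) / triangle k ≤ 1 := (div_le_one htk).2 (Nat.cast_le.2 htlk)
  rw [← rpow_mul_rpow_one_sub hD (triangle l / triangle k)]
  refine mixedMoment_le_of_interpolate hw (m₁ := triangle k) (n₁ := 0) (m₂ := 0)
    (n₂ := triangle k) (by positivity) hθ ?_ ?_ hD hD (squareSum_nonneg f _ hw)
    (squareSum_nonneg f _ hw) ?_ ?_
  · rw [Nat.cast_zero, mul_zero, add_zero, div_mul_cancel₀ _ htk.ne']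
  · rw [Nat.cast_sub htlk, Nat.cast_zero]
    field_simp
    ring
  · rw [mixedMoment_expSum_zero_right, pow_zero, mul_one]
    exact ha.moment_residueClass_le hD ha₀ han hφ hw ho ξ
  · rw [mixedMoment_expSum_zero_left, pow_zero, one_mul]
    exact hb.moment_residueClass_le hD hb₀ hbn hφ hw ho η

end Decoupling

section BroadNarrow

lemma sum_pow_le_pow_sum {ι : Type*} {T : Finset ι} {A : ι → ℝ} (hA : ∀ i ∈ T, 0 ≤ A i) {s : ℕ}
    (hs : s ≠ 0) : ∑ i ∈ T, A i ^ s ≤ (∑ i ∈ T, A i) ^ s := by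
  obtain ⟨s, rfl⟩ := Nat.exists_eq_succ_of_ne_zero hs
  rw [pow_succ, mul_sum]
  refine sum_le_sum fun i hi ↦ ?_
  rw [pow_succ]
  exact mul_le_mul_of_nonneg_right
    (pow_le_pow_left₀ (hA i hi) (single_le_sum hA hi) s) (hA i hi)

/-- Take `c` with `‖z c‖` maximal. Either all other terms are smaller by a factor `card ι`, or
some other term is comparable to it. -/
lemma exists_norm_sum_le_or {ι E : Type*} [Fintype ι] [Nonempty ι]
    [SeminormedAddCommGroup E] (z : ι → E) :
    ∃ c, ‖∑ i, z i‖ ≤ 2 * ‖z c‖ ∨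
      ∃ d, c ≠ d ∧ ‖∑ i, z i‖ ^ 2 ≤ (Fintype.card ι : ℝ) ^ 3 * (‖z c‖ * ‖z d‖) := by
  classical
  obtain ⟨c, -, hmax⟩ := (univ : Finset ι).exists_max_image (fun i ↦ ‖z i‖) univ_nonempty
  have hN : (0 : ℝ) < Fintype.card ι := Nat.cast_pos.2 Fintype.card_pos
  refine ⟨c, ?_⟩
  by_cases hsmall : ∀ d, d ≠ c → ‖z d‖ ≤ ‖z c‖ / Fintype.card ι
  · left
    have hrest : ∑ d ∈ univ.erase c, ‖z d‖ ≤ ‖z c‖ :=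
      calc ∑ d ∈ univ.erase c, ‖z d‖
          ≤ #(univ.erase c) • (‖z c‖ / Fintype.card ι) :=
            sum_le_card_nsmul _ _ _ fun d hd ↦ hsmall d (ne_of_mem_erase hd)
        _ ≤ Fintype.card ι * (‖z c‖ / Fintype.card ι) := by
            rw [nsmul_eq_mul]
            gcongr
            exact card_erase_le
        _ = ‖z c‖ := mul_div_cancel₀ _ hN.ne'
    calc ‖∑ i, z i‖ ≤ ∑ i, ‖z i‖ := norm_sum_le _ _
      _ = ‖z c‖ + ∑ d ∈ univ.erase c, ‖z d‖ := (add_sum_erase _ _ (mem_univ c)).symm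
      _ ≤ 2 * ‖z c‖ := by linarith
  · right
    push Not at hsmall
    obtain ⟨d, hdc, hd⟩ := hsmall
    rw [div_lt_iff₀' hN] at hd
    have hsum : ‖∑ i, z i‖ ≤ Fintype.card ι * ‖z c‖ := by
      simpa using (norm_sum_le _ _).trans (sum_le_card_nsmul univ _ _ hmax)
    refine ⟨d, hdc.symm, ?_⟩
    calc ‖∑ i, z i‖ ^ 2 ≤ (Fintype.card ι * ‖z c‖) ^ 2 := by gcongr
      _ = (Fintype.card ι : ℝ) ^ 2 * (‖z c‖ * ‖z c‖) := by ring
      _ ≤ (Fintype.card ι : ℝ) ^ 2 * (‖z c‖ * (Fintype.card ι * ‖z d‖)) := by gcongr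
      _ = _ := by ring

lemma norm_sum_pow_le_add_sum_offDiag {ι E : Type*} [Fintype ι] [Nonempty ι]
    [SeminormedAddCommGroup E] (z : ι → E) (s : ℕ) :
    ‖∑ i, z i‖ ^ (2 * s) ≤ 4 ^ s * ∑ c, ‖z c‖ ^ (2 * s)
      + (Fintype.card ι : ℝ) ^ (3 * s) * ∑ e ∈ univ.offDiag, ‖z e.1‖ ^ s * ‖z e.2‖ ^ s := by
  have hdiag : 0 ≤ (4 : ℝ) ^ s * ∑ c, ‖z c‖ ^ (2 * s) := by positivity
  have hoff : 0 ≤ (Fintype.card ι : ℝ) ^ (3 * s)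
      * ∑ e ∈ univ.offDiag, ‖z e.1‖ ^ s * ‖z e.2‖ ^ s := by positivity
  obtain ⟨c, hc | ⟨d, hcd, hd⟩⟩ := exists_norm_sum_le_or z
  · refine le_add_of_le_of_nonneg ?_ hoff
    calc ‖∑ i, z i‖ ^ (2 * s) ≤ (2 * ‖z c‖) ^ (2 * s) := by gcongr
      _ = 4 ^ s * ‖z c‖ ^ (2 * s) := by rw [mul_pow, pow_mul]; norm_num
      _ ≤ _ := by
        gcongr
        exact single_le_sum (f := fun c ↦ ‖z c‖ ^ (2 * s)) (fun _ _ ↦ by positivity) (mem_univ c)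
  · refine le_add_of_nonneg_of_le hdiag ?_
    calc ‖∑ i, z i‖ ^ (2 * s) ≤ ((Fintype.card ι : ℝ) ^ 3 * (‖z c‖ * ‖z d‖)) ^ s := by
          rw [pow_mul]
          gcongr
      _ = (Fintype.card ι : ℝ) ^ (3 * s) * (‖z c‖ ^ s * ‖z d‖ ^ s) := by
          rw [mul_pow, mul_pow, pow_mul]
      _ ≤ _ := by
        gcongr
        exact single_le_sum (f := fun e : ι × ι ↦ ‖z e.1‖ ^ s * ‖z e.2‖ ^ s) (a := (c, d))
          (fun _ _ ↦ by positivity) (mem_offDiag.2 ⟨mem_univ c, mem_univ d, hcd⟩)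

lemma pow_mul_pow_le_add {t s : ℕ} (h : t ≤ s) (A B : ℝ) :
    A ^ s * B ^ s
      ≤ A ^ (2 * t) * B ^ (2 * (s - t)) + B ^ (2 * t) * A ^ (2 * (s - t)) := by
  obtain ⟨u, rfl⟩ := Nat.exists_eq_add_of_le h
  rw [Nat.add_sub_cancel_left]
  calc A ^ (t + u) * B ^ (t + u) = (A ^ t * B ^ u) * (B ^ t * A ^ u) := by ring
    _ ≤ (A ^ t * B ^ u) ^ 2 + (B ^ t * A ^ u) ^ 2 := by
        nlinarith [sq_nonneg (A ^ t * B ^ u - B ^ t * A ^ u), sq_nonneg (A ^ t * B ^ u),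
          sq_nonneg (B ^ t * A ^ u)]
    _ = _ := by ring

variable {Ω : Type*} {w : Ω → ℝ} (N : ℕ) [NeZero N] (f : ℤ → Ω → ℂ)

lemma norm_expSum_pow_le (S : Finset ℤ) (ω : Ω) (m : ℕ) :
    ‖expSum f S ω‖ ^ m ≤ (N : ℝ) ^ m * ∑ c, ‖expSum f (residueClass N c S) ω‖ ^ m := by
  have hN : (1 : ℝ) ≤ N := Nat.one_le_cast.2 NeZero.one_le
  cases m with
  | zero => simpa [ZMod.card] using hN
  | succ m =>
    calc ‖expSum f S ω‖ ^ (m + 1)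
        ≤ (∑ c, ‖expSum f (residueClass N c S) ω‖) ^ (m + 1) := by
          rw [expSum_eq_sum_residueClass N]
          gcongr
          exact norm_sum_le _ _
      _ ≤ (N : ℝ) ^ m * ∑ c, ‖expSum f (residueClass N c S) ω‖ ^ (m + 1) := by
          simpa [ZMod.card] using pow_sum_le_card_mul_sum_pow
            (fun c (_ : c ∈ (univ : Finset (ZMod N))) ↦
              norm_nonneg (expSum f (residueClass N c S) ω)) m
      _ ≤ _ := by
          gcongr
          exact Nat.le_succ m

variable [Fintype Ω]

lemma moment_le_sum_moment_residueClass (hw : 0 ≤ w) (s : ℕ) (S : Finset ℤ) :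
    moment s w f S ≤ (N : ℝ) ^ (2 * s) * ∑ c, moment s w f (residueClass N c S) := by
  unfold moment
  rw [sum_comm, mul_sum]
  refine sum_le_sum fun ω _ ↦ ?_
  rw [← mul_sum, mul_left_comm]
  exact mul_le_mul_of_nonneg_left (norm_expSum_pow_le N f S ω _) (hw ω)

lemma mixedMoment_le_sum_residueClass (hw : 0 ≤ w) (m n M : ℕ) [NeZero M] (I J : Finset ℤ) :
    mixedMoment m n w (expSum f I) (expSum f J) ≤ ((M : ℝ) ^ (2 * m) * (N : ℝ) ^ (2 * n)) *
      ∑ c, ∑ d, mixedMoment m n w (expSum f (residueClass M c I))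
        (expSum f (residueClass N d J)) := by
  have hterm (ω : Ω) : w ω * (‖expSum f I ω‖ ^ (2 * m) * ‖expSum f J ω‖ ^ (2 * n))
      ≤ ((M : ℝ) ^ (2 * m) * (N : ℝ) ^ (2 * n)) * ∑ c, ∑ d,
        w ω * (‖expSum f (residueClass M c I) ω‖ ^ (2 * m)
          * ‖expSum f (residueClass N d J) ω‖ ^ (2 * n)) := by
    have h := mul_le_mul_of_nonneg_left (mul_le_mul (norm_expSum_pow_le M f I ω (2 * m))
      (norm_expSum_pow_le N f J ω (2 * n)) (by positivity) (by positivity)) (hw ω)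
    refine h.trans_eq ?_
    rw [mul_mul_mul_comm, mul_left_comm, sum_mul_sum]
    simp only [mul_sum]
  refine (sum_le_sum fun ω _ ↦ hterm ω).trans_eq ?_
  rw [← mul_sum, sum_comm]
  refine congrArg _ (sum_congr rfl fun c _ ↦ sum_comm)

lemma moment_le_add_sum_mixedMoment (hw : 0 ≤ w) {s t : ℕ} (hts : t ≤ s) (S : Finset ℤ) :
    moment s w f S ≤ 4 ^ s * ∑ c, moment s w f (residueClass N c S)
      + (N : ℝ) ^ (3 * s) * ∑ e ∈ (univ : Finset (ZMod N)).offDiag,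
        (mixedMoment t (s - t) w (expSum f (residueClass N e.1 S)) (expSum f (residueClass N e.2 S))
        + mixedMoment t (s - t) w (expSum f (residueClass N e.2 S))
          (expSum f (residueClass N e.1 S))) := by
  unfold moment mixedMoment
  simp only [← sum_add_distrib]
  rw [sum_comm, sum_comm (s := offDiag _), mul_sum, mul_sum, ← sum_add_distrib]
  refine sum_le_sum fun ω _ ↦ ?_
  have hbn := norm_sum_pow_le_add_sum_offDiag (fun c ↦ expSum f (residueClass N c S) ω) s
  rw [← expSum_eq_sum_residueClass, ZMod.card] at hbn
  simp only [← mul_add, ← mul_sum]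
  rw [mul_left_comm, mul_left_comm _ (w ω), ← mul_add]
  refine mul_le_mul_of_nonneg_left (hbn.trans ?_) (hw ω)
  gcongr with e
  exact pow_mul_pow_le_add hts _ _

end BroadNarrow

section InductionOnScales

variable {p : ℕ} [Fact p.Prime]

lemma BilinearDecoupling.mixedMoment_residueClass_le {k l n a b : ℕ} {K : ℝ}
    (h : BilinearDecoupling p k l n a b K) (hK : 0 ≤ K) (hl : 0 < l) (hlk : l < k) (ha : a ≠ 0)
    (han : a ≤ n) (hb : b ≠ 0) (hbn : b ≤ n) {Ω : Type} [Fintype Ω] {φ : Fin k → ℤ_[p][X]}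
    (hφ : ReducesToMomentCurve φ) {w : Ω → ℝ} (hw : 0 ≤ w) {S : Finset ℤ} {f : ℤ → Ω → ℂ}
    (ho : OrthogonalMod (triangle k) ((p : ℤ_[p]) ^ (k * n)) φ w S f) {ξ η : ℤ}
    (hne : ¬ (p : ℤ) ∣ ξ - η) (c : ZMod (p ^ a)) (d : ZMod (p ^ b)) :
    mixedMoment (triangle l) (triangle k - triangle l) w
        (expSum f (residueClass (p ^ a) c (residueClass (p ^ 1) ξ S)))
        (expSum f (residueClass (p ^ b) d (residueClass (p ^ 1) η S)))
      ≤ K * (squareSum (p ^ n) (triangle k) w f (residueClass (p ^ 1) ξ S) ^ triangle l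
        * squareSum (p ^ n) (triangle k) w f (residueClass (p ^ 1) η S)
          ^ (triangle k - triangle l)) := by
  have htl := triangle_pos hl
  have htlk := triangle_strictMono hlk
  have hq (T : Finset ℤ) := squareSum_nonneg (N := p ^ n) (s := triangle k) f T hw
  have hsub {M : ℕ} [NeZero M] (hM : M ∣ p ^ n) (c : ZMod M) (T : Finset ℤ) :=
    squareSum_residueClass_le f T hM (htl.trans htlk).ne' hw c
  obtain ⟨c, rfl⟩ := ZMod.intCast_surjective c
  obtain ⟨d, rfl⟩ := ZMod.intCast_surjective d
  by_cases hcd : (c : ZMod (p ^ 1)) = ξ ∧ (d : ZMod (p ^ 1)) = η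
  · obtain ⟨hc, hd⟩ := hcd
    have hcd' : ¬ (p : ℤ) ∣ c - d := by
      rw [← pow_one p, ← ZMod.intCast_eq_intCast_iff_dvd_sub] at hne ⊢
      rwa [hc, hd]
    have hcS := residueClass_residueClass (pow_dvd_pow p (Nat.one_le_iff_ne_zero.2 ha)) ξ c S
    have hdS := residueClass_residueClass (pow_dvd_pow p (Nat.one_le_iff_ne_zero.2 hb)) η d S
    rw [if_pos hc] at hcS
    rw [if_pos hd] at hdS
    have hbil := h hφ hw ho hcd'
    rw [← hcS, ← hdS] at hbil
    refine hbil.trans (mul_le_mul_of_nonneg_left (mul_le_mul ?_ ?_ ?_ ?_) hK)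
    · exact pow_le_pow_left₀ (hq _) (hsub (pow_dvd_pow p han) _ _) _
    · exact pow_le_pow_left₀ (hq _) (hsub (pow_dvd_pow p hbn) _ _) _
    · exact pow_nonneg (hq _) _
    · exact pow_nonneg (hq _) _
  · have hzero : mixedMoment (triangle l) (triangle k - triangle l) w
        (expSum f (residueClass (p ^ a) c (residueClass (p ^ 1) ξ S)))
        (expSum f (residueClass (p ^ b) d (residueClass (p ^ 1) η S))) = 0 := by
      rw [residueClass_residueClass (pow_dvd_pow p (Nat.one_le_iff_ne_zero.2 ha)),
        residueClass_residueClass (pow_dvd_pow p (Nat.one_le_iff_ne_zero.2 hb))]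
      refine sum_eq_zero fun ω _ ↦ ?_
      rcases not_and_or.1 hcd with hc | hd
      · simp [if_neg hc, expSum_empty, htl.ne']
      · simp [if_neg hd, expSum_empty, (Nat.sub_pos_of_lt htlk).ne']
    rw [hzero]
    exact mul_nonneg hK (mul_nonneg (pow_nonneg (hq _) _) (pow_nonneg (hq _) _))

lemma BilinearDecoupling.of_refined {k l n a b : ℕ} {K : ℝ} (h : BilinearDecoupling p k l n a b K)
    (hK : 0 ≤ K) (hl : 0 < l) (hlk : l < k) (ha : a ≠ 0) (han : a ≤ n) (hb : b ≠ 0)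
    (hbn : b ≤ n) :
    BilinearDecoupling p k l n 1 1 ((p : ℝ) ^ ((2 * triangle k + 1) * (a + b)) * K) := by
  intro Ω _ φ w S f hφ hw ho ξ η hne
  have hp : (1 : ℝ) ≤ p := Nat.one_le_cast.2 (Fact.out : p.Prime).one_le
  set B := squareSum (p ^ n) (triangle k) w f (residueClass (p ^ 1) ξ S) ^ triangle l
    * squareSum (p ^ n) (triangle k) w f (residueClass (p ^ 1) η S) ^ (triangle k - triangle l)
  have hB₀ : 0 ≤ B :=
    mul_nonneg (pow_nonneg (squareSum_nonneg f _ hw) _) (pow_nonneg (squareSum_nonneg f _ hw) _)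
  have hexp : a * (2 * triangle l) + b * (2 * (triangle k - triangle l)) + (a + b)
      ≤ (2 * triangle k + 1) * (a + b) := by
    have htlk := (triangle_strictMono hlk).le
    have ha' := Nat.mul_le_mul_left (2 * a) htlk
    have hb' := Nat.mul_le_mul_left (2 * b) (Nat.sub_le (triangle k) (triangle l))
    linarith
  calc _ ≤ (((p ^ a : ℕ) : ℝ) ^ (2 * triangle l)
          * ((p ^ b : ℕ) : ℝ) ^ (2 * (triangle k - triangle l)))
          * ∑ _c : ZMod (p ^ a), ∑ _d : ZMod (p ^ b), K * B := by
        refine (mixedMoment_le_sum_residueClass (p ^ b) f hw _ _ (p ^ a) _ _).trans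
          (mul_le_mul_of_nonneg_left (sum_le_sum fun c _ ↦ sum_le_sum fun d _ ↦ ?_)
            (by positivity))
        exact h.mixedMoment_residueClass_le hK hl hlk ha han hb hbn hφ hw ho hne c d
    _ = (p : ℝ) ^ (a * (2 * triangle l) + b * (2 * (triangle k - triangle l)) + (a + b))
          * (K * B) := by
        simp only [sum_const, card_univ, ZMod.card, nsmul_eq_mul, Nat.cast_pow, ← pow_mul, pow_add]
        ring
    _ ≤ (p : ℝ) ^ ((2 * triangle k + 1) * (a + b)) * (K * B) := by
        gcongr
    _ = _ := (mul_assoc _ _ _).symm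

lemma Decoupling.sum_moment_residueClass_le {k n : ℕ} {D : ℝ} (h : Decoupling p k (n - 1) D)
    (hD : 0 ≤ D) (hk : 0 < k) (hn : 1 ≤ n) {Ω : Type} [Fintype Ω] {φ : Fin k → ℤ_[p][X]}
    (hφ : ReducesToMomentCurve φ) {w : Ω → ℝ} (hw : 0 ≤ w) {S : Finset ℤ} {f : ℤ → Ω → ℂ}
    (ho : OrthogonalMod (triangle k) ((p : ℤ_[p]) ^ (k * n)) φ w S f) :
    ∑ c, moment (triangle k) w f (residueClass (p ^ 1) c S)
      ≤ D * squareSum (p ^ n) (triangle k) w f S ^ triangle k := by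
  have htk := (triangle_pos hk).ne'
  calc ∑ c, moment (triangle k) w f (residueClass (p ^ 1) c S)
      ≤ ∑ c, D * squareSum (p ^ n) (triangle k) w f (residueClass (p ^ 1) c S) ^ triangle k :=
        sum_le_sum fun c _ ↦ by
          obtain ⟨c, rfl⟩ := ZMod.intCast_surjective c
          exact h.moment_residueClass_le hD one_ne_zero hn hφ hw ho c
    _ ≤ D * (∑ c, squareSum (p ^ n) (triangle k) w f (residueClass (p ^ 1) c S)) ^ triangle k := by
        rw [← mul_sum]
        exact mul_le_mul_of_nonneg_left
          (sum_pow_le_pow_sum (fun _ _ ↦ squareSum_nonneg f _ hw) htk) hD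
    _ = _ := by rw [sum_squareSum_residueClass f S (pow_dvd_pow p hn) htk]

lemma BilinearDecoupling.mixedMoment_le {k l n : ℕ} {K : ℝ} (h : BilinearDecoupling p k l n 1 1 K)
    (hK : 0 ≤ K) (hlk : l < k) (hn : 1 ≤ n) {Ω : Type} [Fintype Ω] {φ : Fin k → ℤ_[p][X]}
    (hφ : ReducesToMomentCurve φ) {w : Ω → ℝ} (hw : 0 ≤ w) {S : Finset ℤ} {f : ℤ → Ω → ℂ}
    (ho : OrthogonalMod (triangle k) ((p : ℤ_[p]) ^ (k * n)) φ w S f) {c d : ZMod (p ^ 1)}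
    (hcd : c ≠ d) :
    mixedMoment (triangle l) (triangle k - triangle l) w (expSum f (residueClass (p ^ 1) c S))
        (expSum f (residueClass (p ^ 1) d S))
      ≤ K * squareSum (p ^ n) (triangle k) w f S ^ triangle k := by
  have htlk := triangle_strictMono hlk
  have hq (T : Finset ℤ) := squareSum_nonneg (N := p ^ n) (s := triangle k) f T hw
  have hsub (c : ZMod (p ^ 1)) :=
    squareSum_residueClass_le f S (pow_dvd_pow p hn) (Nat.zero_le _ |>.trans_lt htlk).ne' hw c
  obtain ⟨c, rfl⟩ := ZMod.intCast_surjective c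
  obtain ⟨d, rfl⟩ := ZMod.intCast_surjective d
  have hne : ¬ (p : ℤ) ∣ c - d := by
    rw [← pow_one p, ← ZMod.intCast_eq_intCast_iff_dvd_sub]
    exact hcd.symm
  rw [← pow_mul_pow_sub _ htlk.le]
  exact (h hφ hw ho hne).trans (mul_le_mul_of_nonneg_left (mul_le_mul
    (pow_le_pow_left₀ (hq _) (hsub _) _) (pow_le_pow_left₀ (hq _) (hsub _) _)
    (pow_nonneg (hq _) _) (pow_nonneg (hq _) _)) hK)

/-- Broad-narrow analysis: the narrow part is handled at the coarser scale, the broad part by the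
bilinear inequality. -/
lemma Decoupling.of_bilinearDecoupling {k l n : ℕ} (hlk : l < k) (hn : 1 ≤ n) {D K : ℝ}
    (hD : 0 ≤ D) (hK : 0 ≤ K) (hdec : Decoupling p k (n - 1) D)
    (hbil : BilinearDecoupling p k l n 1 1 K) :
    Decoupling p k n (4 ^ triangle k * D + (p : ℝ) ^ (3 * triangle k + 3) * K) := by
  intro Ω _ φ w S f hφ hw ho
  set Q := squareSum (p ^ n) (triangle k) w f S ^ triangle k
  have hKQ : 0 ≤ K * Q := mul_nonneg hK (pow_nonneg (squareSum_nonneg f S hw) _)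
  have hp : (2 : ℝ) ≤ p := Nat.ofNat_le_cast.2 (Fact.out : p.Prime).two_le
  have hpairs : (#(univ : Finset (ZMod (p ^ 1))).offDiag : ℝ) ≤ (p : ℝ) ^ 2 := by
    rw [offDiag_card, card_univ, ZMod.card, pow_one, sq, ← Nat.cast_mul]
    exact Nat.cast_le.2 (Nat.sub_le _ _)
  have hbroad : ∑ e ∈ (univ : Finset (ZMod (p ^ 1))).offDiag,
      (mixedMoment (triangle l) (triangle k - triangle l) w
          (expSum f (residueClass (p ^ 1) e.1 S)) (expSum f (residueClass (p ^ 1) e.2 S))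
        + mixedMoment (triangle l) (triangle k - triangle l) w
          (expSum f (residueClass (p ^ 1) e.2 S)) (expSum f (residueClass (p ^ 1) e.1 S)))
      ≤ (p : ℝ) ^ 3 * (K * Q) :=
    calc _ ≤ #(univ : Finset (ZMod (p ^ 1))).offDiag • (K * Q + K * Q) :=
          sum_le_card_nsmul _ _ _ fun e he ↦ by
            have hne := (mem_offDiag.1 he).2.2
            exact add_le_add (hbil.mixedMoment_le hK hlk hn hφ hw ho hne)
              (hbil.mixedMoment_le hK hlk hn hφ hw ho hne.symm)
      _ ≤ (p : ℝ) ^ 2 * (p * (K * Q)) := by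
          rw [nsmul_eq_mul, ← two_mul]
          gcongr
      _ = (p : ℝ) ^ 3 * (K * Q) := by ring
  calc moment (triangle k) w f S
      ≤ 4 ^ triangle k * (D * Q) + ((p ^ 1 : ℕ) : ℝ) ^ (3 * triangle k) * ((p : ℝ) ^ 3 * (K * Q)) :=
        (moment_le_add_sum_mixedMoment (p ^ 1) f hw (triangle_strictMono hlk).le S).trans
          (add_le_add (mul_le_mul_of_nonneg_left
            (hdec.sum_moment_residueClass_le hD (Nat.zero_lt_of_lt hlk) hn hφ hw ho)
              (by positivity)) (mul_le_mul_of_nonneg_left hbroad (by positivity)))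
    _ = (4 ^ triangle k * D + (p : ℝ) ^ (3 * triangle k + 3) * K) * Q := by
        rw [pow_one, pow_add]
        ring

lemma decoupling_of_pow {k : ℕ} (hk : 0 < k) (n : ℕ) :
    Decoupling p k n ((p : ℝ) ^ (n * (2 * triangle k))) := by
  intro Ω _ φ w S f _ hw _
  have htk := (triangle_pos hk).ne'
  calc moment (triangle k) w f S
      ≤ ((p ^ n : ℕ) : ℝ) ^ (2 * triangle k)
          * ∑ c, sqNorm (triangle k) w f (residueClass (p ^ n) c S) ^ triangle k := by
        simp only [sqNorm_pow f _ htk hw]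
        exact moment_le_sum_moment_residueClass (p ^ n) f hw _ S
    _ ≤ (p : ℝ) ^ (n * (2 * triangle k)) * squareSum (p ^ n) (triangle k) w f S ^ triangle k := by
        rw [Nat.cast_pow, ← pow_mul]
        exact mul_le_mul_of_nonneg_left
          (sum_pow_le_pow_sum (fun _ _ ↦ sqNorm_nonneg f _ hw) htk) (by positivity)

end InductionOnScales

section DimensionOne

variable {p : ℕ} [Fact p.Prime]

/-- Modulo `p` such a `φ` is the identity, so `φ x - φ y` is a unit multiple of `x - y`. -/
lemma pow_dvd_sub_of_pow_dvd_eval_sub {φ : ℤ_[p][X]} (hφ : φ.map PadicInt.toZMod = X) {n : ℕ}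
    {x y : ℤ} (h : (p : ℤ_[p]) ^ n ∣ φ.eval (x : ℤ_[p]) - φ.eval (y : ℤ_[p])) :
    (p : ℤ) ^ n ∣ x - y := by
  have hC : C (p : ℤ_[p]) ∣ φ - X := by
    rw [C_dvd_iff_dvd_coeff]
    intro i
    rw [← Ideal.mem_span_singleton, ← PadicInt.maximalIdeal_eq_span_p, ← PadicInt.ker_toZMod,
      RingHom.mem_ker, ← coeff_map, Polynomial.map_sub, hφ, map_X, sub_self, coeff_zero]
  obtain ⟨ψ, hψ⟩ := hC
  obtain ⟨θ, hθ⟩ := sub_dvd_eval_sub (x : ℤ_[p]) (y : ℤ_[p]) ψ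
  have heval : φ.eval (x : ℤ_[p]) - φ.eval (y : ℤ_[p]) = ((x - y : ℤ) : ℤ_[p]) * (1 + p * θ) := by
    rw [eq_add_of_sub_eq' hψ]
    simp only [eval_add, eval_X, eval_mul, eval_C, Int.cast_sub]
    linear_combination (p : ℤ_[p]) * hθ
  have hunit : IsUnit (1 + (p : ℤ_[p]) * θ) :=
    isUnit_of_map_unit PadicInt.toZMod _ (by simp)
  rw [heval, hunit.dvd_mul_right, ← Ideal.mem_span_singleton,
    ← PadicInt.norm_le_pow_iff_mem_span_pow, PadicInt.norm_int_le_pow_iff_dvd] at h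
  exact_mod_cast h

lemma ofReal_moment_one {Ω : Type*} [Fintype Ω] (w : Ω → ℝ) (f : ℤ → Ω → ℂ) (T : Finset ℤ) :
    ((moment 1 w f T : ℝ) : ℂ) = ∑ x ∈ T, ∑ y ∈ T, correlation w f ![x] ![y] := by
  have hterm (ω : Ω) : ((w ω * ‖expSum f T ω‖ ^ (2 * 1) : ℝ) : ℂ)
      = ∑ x ∈ T, ∑ y ∈ T, (w ω : ℂ) * (f x ω * (starRingEnd ℂ) (f y ω)) := by
    rw [mul_one, Complex.ofReal_mul, ← Complex.normSq_eq_norm_sq, ← Complex.mul_conj, expSum,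
      map_sum, sum_mul_sum]
    simp only [mul_sum]
  simp only [moment, Complex.ofReal_sum, hterm, correlation, Fin.prod_univ_one,
    Matrix.cons_val_fin_one]
  rw [sum_comm]
  exact sum_congr rfl fun x _ ↦ sum_comm

lemma moment_one_eq_sum_residueClass {Ω : Type*} [Fintype Ω] (N : ℕ) [NeZero N] {w : Ω → ℝ}
    {f : ℤ → Ω → ℂ} {S : Finset ℤ}
    (h : ∀ x ∈ S, ∀ y ∈ S, correlation w f ![x] ![y] ≠ 0 → (x : ZMod N) = y) :
    moment 1 w f S = ∑ c, moment 1 w f (residueClass N c S) := by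
  apply Complex.ofReal_injective
  simp only [Complex.ofReal_sum, ofReal_moment_one]
  rw [← sum_fiberwise S (fun x : ℤ ↦ (x : ZMod N))]
  refine sum_congr rfl fun c _ ↦ sum_congr rfl fun x hx ↦ ?_
  obtain ⟨hxS, rfl⟩ := mem_filter.1 hx
  refine (sum_subset (residueClass_subset _ S) fun y hy hyc ↦ ?_).symm
  by_contra hne
  exact hyc (mem_residueClass.2 ⟨hy, (h x hxS y hy hne).symm⟩)

lemma decoupling_one (n : ℕ) : Decoupling p 1 n 1 := by
  intro Ω _ φ w S f hφ _ ho
  have htri : triangle 1 = 1 := rfl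
  have hφ₀ : (φ 0).map PadicInt.toZMod = X := by simpa using hφ 0
  rw [htri, one_mul] at ho
  have hcongr (x : ℤ) (hx : x ∈ S) (y : ℤ) (hy : y ∈ S) (hne : correlation w f ![x] ![y] ≠ 0) :
      (x : ZMod (p ^ n)) = y := by
    have hsol := ho ![x] ![y] (by simpa using hx) (by simpa using hy) hne 0
    rw [eq_comm, ZMod.intCast_eq_intCast_iff_dvd_sub, Nat.cast_pow]
    exact pow_dvd_sub_of_pow_dvd_eval_sub hφ₀ (by simpa using hsol)
  rw [htri, one_mul, pow_one, moment_one_eq_sum_residueClass (p ^ n) hcongr]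
  simp [squareSum, sqNorm]

end DimensionOne

section GainExponent

/-- The gain `g` for which `r` rounds of the bilinear recursion save a factor `p ^ (η * g * b)`,
for the bilinear inequality of order `l` at scales `a = (k - l + 1) b / l` and `b`, when the
decoupling constant at scale `n` is `p ^ (η * n)`. -/
noncomputable def gainExponent (k : ℕ) : ℕ → ℕ → ℝ
  | _, 0 => 1
  | 0, _ + 1 => 0
  | r + 1, l + 1 => gainExponent k r (k - (l + 1)) / (l + 1 : ℕ) +
      ((k : ℝ) - (l + 1 : ℕ)) / (k - l) * gainExponent k r l

lemma gainExponent_zero_right (k r : ℕ) : gainExponent k r 0 = 1 := by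
  cases r <;> rfl

lemma gainExponent_zero_left (k : ℕ) {l : ℕ} (hl : 0 < l) : gainExponent k 0 l = 0 := by
  obtain ⟨l, rfl⟩ := Nat.exists_eq_add_of_le' hl
  rfl

lemma gainExponent_succ (k r : ℕ) {l : ℕ} (hl : 0 < l) :
    gainExponent k (r + 1) l = gainExponent k r (k - l) / l +
      ((k : ℝ) - l) / (k - l + 1) * gainExponent k r (l - 1) := by
  obtain ⟨l, rfl⟩ := Nat.exists_eq_add_of_le' hl
  have hsub : (k : ℝ) - (l + 1 : ℕ) + 1 = k - l := by push_cast; ring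
  rw [hsub]
  rfl

lemma sum_Ico_gainExponent_reflect (k r : ℕ) :
    ∑ l ∈ Ico 1 k, gainExponent k r (k - l) / l
      = ∑ l ∈ Ico 1 k, gainExponent k r l / ((k : ℝ) - l) := by
  have hreflect := sum_Ico_reflect (fun l ↦ gainExponent k r l / ((k : ℝ) - l)) 1 k.le_succ
  simp only [Nat.succ_sub_one, Nat.add_sub_cancel_left] at hreflect
  rw [← hreflect]
  refine sum_congr rfl fun l hl ↦ ?_
  rw [Nat.cast_sub (mem_Ico.1 hl).2.le, sub_sub_cancel]

lemma sum_Ico_gainExponent_shift {k : ℕ} (hk : 0 < k) (r : ℕ) :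
    ∑ l ∈ Ico 1 k, ((k : ℝ) - l) / (k - l + 1) * gainExponent k r (l - 1)
      = ((k : ℝ) - 1) / k + ∑ l ∈ Ico 1 k, ((k : ℝ) - l - 1) / (k - l) * gainExponent k r l := by
  set h : ℕ → ℝ := fun l ↦ ((k : ℝ) - l - 1) / (k - l) * gainExponent k r l with hdef
  obtain ⟨m, rfl⟩ := Nat.exists_eq_add_of_le' hk
  calc _ = ∑ l ∈ range m, h l := by
        rw [sum_Ico_eq_sum_range]
        refine sum_congr rfl fun l _ ↦ ?_
        simp only [hdef, Nat.add_sub_cancel_left, Nat.cast_add, Nat.cast_one]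
        congr 2 <;> ring
    _ = ∑ l ∈ range (m + 1), h l := by
        rw [sum_range_succ, left_eq_add, hdef]
        simp
    _ = _ := by
        rw [sum_range_eq_add_Ico _ m.succ_pos, hdef]
        simp [gainExponent_zero_right]

lemma sum_gainExponent {k : ℕ} (hk : 0 < k) (r : ℕ) :
    ∑ l ∈ Ico 1 k, gainExponent k r l = r * (((k : ℝ) - 1) / k) := by
  induction r with
  | zero =>
    rw [Nat.cast_zero, zero_mul]
    exact sum_eq_zero fun l hl ↦ gainExponent_zero_left k (mem_Ico.1 hl).1
  | succ r ih =>
    have hsplit (l : ℕ) (hl : l ∈ Ico 1 k) : gainExponent k r l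
        = gainExponent k r l / ((k : ℝ) - l)
          + ((k : ℝ) - l - 1) / (k - l) * gainExponent k r l := by
      have hl' : (k : ℝ) - l ≠ 0 := (sub_pos.2 (Nat.cast_lt.2 (mem_Ico.1 hl).2)).ne'
      field_simp
      ring
    rw [sum_congr rfl hsplit, sum_add_distrib] at ih
    rw [sum_congr rfl fun l hl ↦ gainExponent_succ k r (mem_Ico.1 hl).1, sum_add_distrib,
      sum_Ico_gainExponent_reflect, sum_Ico_gainExponent_shift hk]
    push_cast
    linarith

lemma exists_le_gainExponent {k : ℕ} (hk : 2 ≤ k) (r : ℕ) :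
    ∃ l, 0 < l ∧ l < k ∧ (r : ℝ) / k ≤ gainExponent k r l := by
  have hsum : ∑ _l ∈ Ico 1 k, (r : ℝ) / k ≤ ∑ l ∈ Ico 1 k, gainExponent k r l := by
    rw [sum_gainExponent (by lia), sum_const, Nat.card_Ico, nsmul_eq_mul,
      Nat.cast_sub (by lia), Nat.cast_one]
    exact le_of_eq (by ring)
  obtain ⟨l, hl, hle⟩ := exists_le_of_sum_le (nonempty_Ico.2 hk) hsum
  exact ⟨l, (mem_Ico.1 hl).1, (mem_Ico.1 hl).2, hle⟩

end GainExponent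

section Iteration

variable {p : ℕ} [Fact p.Prime]

lemma one_le_natCast_prime : (1 : ℝ) ≤ p := Nat.one_le_cast.2 (Fact.out : p.Prime).one_le

lemma natCast_prime_pos : (0 : ℝ) < p := zero_lt_one.trans_le one_le_natCast_prime

lemma natCast_prime_rpow_mono {x y : ℝ} (h : x ≤ y) : (p : ℝ) ^ x ≤ (p : ℝ) ^ y :=
  Real.rpow_le_rpow_of_exponent_le one_le_natCast_prime h

lemma Decoupling.mono_scale {k m n : ℕ} {C η : ℝ} (h : Decoupling p k m (C * (p : ℝ) ^ (η * m)))
    (hC : 0 ≤ C) (hη : 0 ≤ η) (hmn : m ≤ n) : Decoupling p k m (C * (p : ℝ) ^ (η * n)) :=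
  h.mono (mul_le_mul_of_nonneg_left
    (natCast_prime_rpow_mono (mul_le_mul_of_nonneg_left (Nat.cast_le.2 hmn) hη)) hC)

/-- The bilinear inequalities produced by `r` rounds of the recursion, for all orders `0 < l < k`
at the scales `a = (k - l + 1) b / l` and `b`. Here `η` and `δ` are decoupling exponents for the
curves of dimension `k` and of smaller dimension. The divisibility of `b` keeps all scales that
occur in the recursion integral, and `k ^ (r + 1) * b ≤ n` keeps them below `n`. -/
def IteratedBound (p k : ℕ) [Fact p.Prime] (C η δ : ℝ) (r : ℕ) : Prop :=
  ∀ ⦃l n a b : ℕ⦄, 0 < l → l < k → b ≠ 0 → k.factorial ^ (r + 1) ∣ b → k ^ (r + 1) * b ≤ n →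
    l * a = (k - l + 1) * b →
    BilinearDecoupling p k l n a b
      (C ^ (r + 1) * (p : ℝ) ^ (η * (n - gainExponent k r l * b) + r * δ * n))

lemma scale_ne_zero {k l a b : ℕ} (hb : b ≠ 0) (hab : l * a = (k - l + 1) * b) : a ≠ 0 := by
  rintro rfl
  exact mul_ne_zero (k - l).succ_ne_zero hb hab.symm

lemma scale_le_mul {k l a b : ℕ} (hl : 0 < l) (hlk : l ≤ k) (hab : l * a ≤ (k - l + 1) * b) :
    a ≤ k * b :=
  (Nat.le_mul_of_pos_left a hl).trans (hab.trans (Nat.mul_le_mul_right b (by lia)))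

lemma pow_dvd_scale {k l m a b : ℕ} {M : ℕ} (hM : 0 < M) (hlM : l ∣ M) (hb : M ^ (m + 1) ∣ b)
    (hab : l * a = (k - l + 1) * b) : M ^ m ∣ a := by
  refine Nat.dvd_of_mul_dvd_mul_left hM ?_
  rw [← pow_succ']
  exact (hb.mul_left _).trans (hab ▸ Nat.mul_dvd_mul_right hlM a)

variable {k r : ℕ} {C η δ : ℝ}

lemma IteratedBound.zero (hC : 0 ≤ C) (hη : 0 ≤ η)
    (hdec : ∀ n : ℕ, Decoupling p k n (C * (p : ℝ) ^ (η * n))) : IteratedBound p k C η δ 0 := by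
  intro l n a b hl hlk hb _ hbn hab
  rw [zero_add, pow_one] at hbn
  have han : a ≤ n := (scale_le_mul hl hlk.le hab.le).trans hbn
  have hbn' : b ≤ n := (Nat.le_mul_of_pos_left b (hl.trans hlk)).trans hbn
  rw [gainExponent_zero_left k hl, zero_add, pow_one, zero_mul, sub_zero, Nat.cast_zero, zero_mul,
    zero_mul, add_zero]
  exact Decoupling.bilinearDecoupling ((hdec _).mono_scale hC hη (Nat.sub_le n a))
    ((hdec _).mono_scale hC hη (Nat.sub_le n b))
    (mul_nonneg hC (Real.rpow_nonneg p.cast_nonneg _)) (hl.trans hlk) hlk.le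
    (scale_ne_zero hb hab) han hb hbn'

lemma IteratedBound.coarsen (h : IteratedBound p k C η δ r) (hC : 0 ≤ C) (hδ : 0 ≤ δ)
    (hkp : k < p) {l n a b : ℕ} (hl : 0 < l) (hlk : l < k)
    (hdec : ∀ n : ℕ, Decoupling p l n (C * (p : ℝ) ^ (δ * n))) (ha : a ≠ 0) (hb : b ≠ 0)
    (hdvd : k.factorial ^ (r + 1) ∣ b) (hbn : k ^ (r + 1) * b ≤ n)
    (hab : l * a ≤ (k - l + 1) * b) :
    BilinearDecoupling p k l n a b
      (C ^ (r + 2) * (p : ℝ) ^ (η * (n - gainExponent k r l * b) + (r + 1) * δ * n)) := by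
  obtain ⟨a', ha'⟩ : l ∣ (k - l + 1) * b :=
    ((Nat.dvd_factorial hl hlk.le).trans ((dvd_pow_self _ r.succ_ne_zero).trans hdvd)).mul_left _
  have haa' : a ≤ a' := Nat.le_of_mul_le_mul_left (ha' ▸ hab) hl
  have ha'n : a' ≤ n := (scale_le_mul hl hlk.le ha'.ge).trans
    ((Nat.mul_le_mul_right b (Nat.le_self_pow r.succ_ne_zero k)).trans hbn)
  have hcoarse := (h hl hlk hb hdvd hbn ha'.symm).coarsen
    ((hdec _).mono_scale hC hδ ((Nat.sub_le a' a).trans ha'n)) (by positivity) (by positivity)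
    hl hlk hkp ha haa' ha'n (ha'.ge.trans (mul_comm _ _).le)
  convert hcoarse using 1
  rw [mul_mul_mul_comm, ← pow_succ', ← Real.rpow_add natCast_prime_pos]
  congr 2
  ring

lemma mul_rpow_rpow_mul_rpow_one_sub (hC : 0 < C) (x y θ : ℝ) :
    (C * (p : ℝ) ^ x) ^ θ * (C * (p : ℝ) ^ y) ^ (1 - θ)
      = C * (p : ℝ) ^ (θ * x + (1 - θ) * y) := by
  have hp := natCast_prime_pos (p := p)
  rw [Real.mul_rpow hC.le (by positivity), Real.mul_rpow hC.le (by positivity), mul_mul_mul_comm,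
    ← Real.rpow_add hC, ← Real.rpow_mul hp.le, ← Real.rpow_mul hp.le, ← Real.rpow_add hp,
    add_sub_cancel, Real.rpow_one, mul_comm x, mul_comm y]

lemma interpolate_gainExponent {l n a b : ℕ} (hl : 0 < l) (hlk : l < k)
    (hab : l * a = (k - l + 1) * b) :
    1 / ((k : ℝ) - l + 1) * (η * (n - gainExponent k r (k - l) * a) + (r + 1) * δ * n)
      + (1 - 1 / ((k : ℝ) - l + 1))
        * (η * (n - gainExponent k r (l - 1) * b) + (r + 1) * δ * n)
      = η * (n - gainExponent k (r + 1) l * b) + (r + 1) * δ * n := by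
  have hl' : (l : ℝ) ≠ 0 := Nat.cast_ne_zero.2 hl.ne'
  have hden : (k : ℝ) - l + 1 ≠ 0 := by
    have : (l : ℝ) < k := Nat.cast_lt.2 hlk
    linarith
  have ha : (a : ℝ) = ((k : ℝ) - l + 1) * b / l := by
    rw [eq_div_iff hl', mul_comm, ← Nat.cast_sub hlk.le]
    exact_mod_cast hab
  rw [gainExponent_succ k r hl, ha]
  field_simp
  ring

lemma IteratedBound.coarsen_sub_one (h : IteratedBound p k C η δ r) (hC : 1 ≤ C) (hδ : 0 ≤ δ)
    (hkp : k < p) (hdec : ∀ n : ℕ, Decoupling p k n (C * (p : ℝ) ^ (η * n))) {l n a b : ℕ}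
    (hl : 0 < l) (hlk : l < k)
    (hdec_lt : 0 < l - 1 → l - 1 < k → ∀ n : ℕ, Decoupling p (l - 1) n (C * (p : ℝ) ^ (δ * n)))
    (ha : a ≠ 0) (hb : b ≠ 0) (hdvd : k.factorial ^ (r + 1) ∣ b) (hbn : k ^ (r + 1) * b ≤ n)
    (hab : l * a ≤ (k - l + 1) * b) :
    BilinearDecoupling p k (l - 1) n a b
      (C ^ (r + 2) * (p : ℝ) ^ (η * (n - gainExponent k r (l - 1) * b) + (r + 1) * δ * n)) := by
  have hC₀ : 0 ≤ C := zero_le_one.trans hC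
  have hpred : l - 1 < k := (Nat.sub_le l 1).trans_lt hlk
  rcases (l - 1).eq_zero_or_pos with hl₁ | hl₁
  · have hbn' : b ≤ n := (Nat.le_mul_of_pos_left b (pow_pos (hl.trans hlk) _)).trans hbn
    rw [hl₁, gainExponent_zero_right, one_mul, ← Nat.cast_sub hbn']
    refine ((hdec (n - b)).bilinearDecoupling_zero (by positivity) hb hbn').mono ?_
    gcongr
    · exact le_self_pow₀ hC (Nat.succ_ne_zero _)
    · exact one_le_natCast_prime
    · exact le_add_of_nonneg_right (by positivity)
  · refine h.coarsen hC₀ hδ hkp hl₁ hpred (hdec_lt hl₁ hpred) ha hb hdvd hbn ?_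
    exact (Nat.mul_le_mul_right a (Nat.sub_le l 1)).trans
      (hab.trans (Nat.mul_le_mul_right b (by lia)))

lemma IteratedBound.succ (h : IteratedBound p k C η δ r) (hC : 1 ≤ C) (hδ : 0 ≤ δ) (hkp : k < p)
    (hdec : ∀ n : ℕ, Decoupling p k n (C * (p : ℝ) ^ (η * n)))
    (hdec_lt : ∀ l, 0 < l → l < k → ∀ n : ℕ, Decoupling p l n (C * (p : ℝ) ^ (δ * n))) :
    IteratedBound p k C η δ (r + 1) := by
  intro l n a b hl hlk hb hdvd hbn hab
  have hC₀ : 0 < C := zero_lt_one.trans_le hC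
  have hk : 0 < k := hl.trans hlk
  have ha := scale_ne_zero hb hab
  have hdvd_a := pow_dvd_scale k.factorial_pos (Nat.dvd_factorial hl hlk.le) hdvd hab
  have hdvd_b := (pow_dvd_pow _ (r + 1).le_succ).trans hdvd
  have hkb : k ^ (r + 1) * (k * b) ≤ n := by rwa [← mul_assoc, ← pow_succ]
  have hbn' : k ^ (r + 1) * b ≤ n :=
    (Nat.mul_le_mul_left _ (Nat.le_mul_of_pos_left b hk)).trans hkb
  have han : k ^ (r + 1) * a ≤ n :=
    (Nat.mul_le_mul_left _ (scale_le_mul hl hlk.le hab.le)).trans hkb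
  have hfirst := h.coarsen hC₀.le hδ hkp (Nat.sub_pos_of_lt hlk) (Nat.sub_lt hk hl)
    (hdec_lt _ (Nat.sub_pos_of_lt hlk) (Nat.sub_lt hk hl)) hb ha hdvd_a han
    (by rw [Nat.sub_sub_self hlk.le]; linarith)
  have hsecond := h.coarsen_sub_one hC hδ hkp hdec hl hlk (hdec_lt (l - 1)) ha hb hdvd_b hbn' hab.le
  have hinterp := BilinearDecoupling.interpolate hl hlk (by positivity) (by positivity)
    hfirst hsecond
  rw [mul_rpow_rpow_mul_rpow_one_sub (by positivity), interpolate_gainExponent hl hlk hab]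
    at hinterp
  exact_mod_cast hinterp

lemma IteratedBound.of_decoupling (hC : 1 ≤ C) (hη : 0 ≤ η) (hδ : 0 ≤ δ) (hkp : k < p)
    (hdec : ∀ n : ℕ, Decoupling p k n (C * (p : ℝ) ^ (η * n)))
    (hdec_lt : ∀ l, 0 < l → l < k → ∀ n : ℕ, Decoupling p l n (C * (p : ℝ) ^ (δ * n))) (r : ℕ) :
    IteratedBound p k C η δ r := by
  induction r with
  | zero => exact .zero (zero_le_one.trans hC) hη hdec
  | succ r ih => exact ih.succ hC hδ hkp hdec hdec_lt

/-- `η` is an admissible exponent in the decoupling inequality for curves of dimension `k`: at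
scale `n` its constant is `O(p ^ (η * n))`. -/
def DecouplingExponent (p k : ℕ) [Fact p.Prime] (η : ℝ) : Prop :=
  ∃ C : ℝ, ∀ n : ℕ, Decoupling p k n (C * (p : ℝ) ^ (η * n))

lemma DecouplingExponent.eventually (h : DecouplingExponent p k η) :
    ∀ᶠ C : ℝ in Filter.atTop, ∀ n : ℕ, Decoupling p k n (C * (p : ℝ) ^ (η * n)) := by
  obtain ⟨C, hC⟩ := h
  filter_upwards [Filter.eventually_ge_atTop C] with C' hCC' n
  exact (hC n).mono (by gcongr)

lemma DecouplingExponent.mono {η' : ℝ} (h : DecouplingExponent p k η) (hη : η ≤ η') :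
    DecouplingExponent p k η' := by
  obtain ⟨C, hC, hdec⟩ := ((Filter.eventually_ge_atTop 0).and h.eventually).exists
  exact ⟨C, fun n ↦ (hdec n).mono (mul_le_mul_of_nonneg_left
    (natCast_prime_rpow_mono (by gcongr)) hC)⟩

lemma decouplingExponent_one (hη : 0 ≤ η) : DecouplingExponent p 1 η :=
  ⟨1, fun n ↦ (decoupling_one n).mono <| by
    rw [one_mul]
    exact Real.one_le_rpow one_le_natCast_prime (by positivity)⟩

lemma decouplingExponent_two_mul_triangle (hk : 0 < k) :
    DecouplingExponent p k (2 * triangle k) :=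
  ⟨1, fun n ↦ (decoupling_of_pow hk n).mono <| by
    rw [one_mul, ← Real.rpow_natCast, mul_comm n]
    push_cast
    rfl⟩

/-- Once `2 * 4 ^ triangle k ≤ p ^ η`, the loss `4 ^ triangle k` of a single scale is absorbed. -/
lemma DecouplingExponent.of_bilinearDecoupling {l T : ℕ} {K : ℝ} (hlk : l < k) (hη : 0 ≤ η)
    (hK : 0 ≤ K) (hp : 2 * (4 : ℝ) ^ triangle k ≤ (p : ℝ) ^ η)
    (h : ∀ n ≥ T, BilinearDecoupling p k l n 1 1 (K * (p : ℝ) ^ (η * n))) :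
    DecouplingExponent p k η := by
  have hk : 0 < k := Nat.zero_lt_of_lt hlk
  set A : ℝ := (p : ℝ) ^ (T * (2 * triangle k))
  set B : ℝ := (p : ℝ) ^ (3 * triangle k + 3) * K
  have hA : 0 ≤ A := by positivity
  have hB : 0 ≤ B := by positivity
  have hsmall {n : ℕ} (hn : n ≤ T) : Decoupling p k n ((A + 2 * B) * (p : ℝ) ^ (η * n)) := by
    refine (decoupling_of_pow hk n).mono ?_
    calc (p : ℝ) ^ (n * (2 * triangle k)) ≤ A :=
          pow_le_pow_right₀ one_le_natCast_prime (Nat.mul_le_mul_right _ hn)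
      _ ≤ A + 2 * B := by linarith
      _ ≤ _ := le_mul_of_one_le_right (by positivity)
        (Real.one_le_rpow one_le_natCast_prime (by positivity))
  refine ⟨A + 2 * B, fun n ↦ ?_⟩
  induction n with
  | zero => exact hsmall T.zero_le
  | succ n ih =>
    rcases le_or_gt (n + 1) T with hn | hn
    · exact hsmall hn
    refine (Decoupling.of_bilinearDecoupling hlk n.succ_pos (by positivity) (by positivity) ih
      (h (n + 1) hn.le)).mono ?_
    have hpow : (p : ℝ) ^ (η * (n + 1 : ℕ)) = (p : ℝ) ^ η * (p : ℝ) ^ (η * n) := by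
      rw [← Real.rpow_add natCast_prime_pos]
      push_cast
      ring_nf
    have hscale : 4 ^ triangle k * (p : ℝ) ^ (η * n) ≤ (p : ℝ) ^ (η * (n + 1 : ℕ)) / 2 := by
      rw [hpow, mul_div_right_comm]
      exact mul_le_mul_of_nonneg_right (by linarith) (by positivity)
    have hAB := mul_le_mul_of_nonneg_left hscale (by positivity : 0 ≤ A + 2 * B)
    have hAY := mul_nonneg hA (by positivity : 0 ≤ (p : ℝ) ^ (η * (n + 1 : ℕ)))
    linarith

lemma exists_multiple_le {M q n : ℕ} (hM : 0 < M) (hq : 0 < q) (hn : q * M ≤ n) :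
    ∃ b, b ≠ 0 ∧ M ∣ b ∧ q * b ≤ n ∧ (n : ℝ) / q ≤ b + M := by
  refine ⟨M * (n / (q * M)), mul_ne_zero hM.ne' (Nat.div_pos hn (by positivity)).ne',
    dvd_mul_right _ _, ?_, ?_⟩
  · rw [← mul_assoc]
    exact Nat.mul_div_le n (q * M)
  · rw [div_le_iff₀' (Nat.cast_pos.2 hq)]
    have hlt : n < q * M * (n / (q * M) + 1) := Nat.lt_mul_div_succ n (by positivity)
    exact_mod_cast hlt.le.trans (by rw [mul_assoc, mul_add_one])

lemma IteratedBound.bilinearDecoupling_one_one (h : IteratedBound p k C η δ r) (hC : 0 ≤ C)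
    {l n a b : ℕ} (hl : 0 < l) (hlk : l < k) (hb : b ≠ 0) (hdvd : k.factorial ^ (r + 1) ∣ b)
    (hbn : k ^ (r + 1) * b ≤ n) (hab : l * a = (k - l + 1) * b) :
    BilinearDecoupling p k l n 1 1 (C ^ (r + 1) * (p : ℝ) ^ ((2 * triangle k + 1) * (k + 1) * b +
      (η * (n - gainExponent k r l * b) + r * δ * n))) := by
  have hak := scale_le_mul hl hlk.le hab.le
  have hkbn : k * b ≤ n :=
    (Nat.mul_le_mul_right b (Nat.le_self_pow r.succ_ne_zero k)).trans hbn
  have hbn' : b ≤ n := (Nat.le_mul_of_pos_left b (hl.trans hlk)).trans hkbn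
  refine ((h hl hlk hb hdvd hbn hab).of_refined (by positivity) hl hlk (scale_ne_zero hb hab)
    (hak.trans hkbn) hb hbn').mono ?_
  have hscales : (((2 * triangle k + 1) * (a + b) : ℕ) : ℝ)
      ≤ (2 * triangle k + 1) * (k + 1) * b := by
    have hab' : (a + b : ℝ) ≤ (k + 1) * b := by
      rw [add_one_mul]
      exact_mod_cast Nat.add_le_add_right hak b
    push_cast
    rw [mul_assoc]
    gcongr
  rw [Real.rpow_add natCast_prime_pos ((2 * (triangle k : ℝ) + 1) * (k + 1) * b), mul_left_comm]
  gcongr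
  rw [← Real.rpow_natCast]
  exact natCast_prime_rpow_mono (p := p) hscales

/-- For `r` large in terms of `ε`, the gain `η * r / k ≥ ε * r / k` per unit of `b` beats the
cost `(2 * triangle k + 1) * (k + 1)` of restricting to fine scales. -/
lemma DecouplingExponent.improve {ε σ : ℝ} (hk : 2 ≤ k) (hkp : k < p) (hε : 0 ≤ ε) (hεη : ε ≤ η)
    (hδ : 0 ≤ δ) (hr : (2 * (triangle k : ℝ) + 1) * (k + 1) + 1 ≤ ε * (r / k))
    (hσ : σ + r * δ ≤ 1 / (k : ℝ) ^ (r + 1)) (hp : 2 * (4 : ℝ) ^ triangle k ≤ (p : ℝ) ^ ε)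
    (h : DecouplingExponent p k η)
    (hlt : ∀ l ∈ Ioo 0 k, DecouplingExponent p l δ) : DecouplingExponent p k (max (η - σ) ε) := by
  obtain ⟨C, ⟨hC, hdec⟩, hdec_lt⟩ := (((Filter.eventually_ge_atTop 1).and h.eventually).and
    ((Ioo 0 k).eventually_all.2 fun l hl ↦ (hlt l hl).eventually)).exists
  have hC₀ : 0 ≤ C := zero_le_one.trans hC
  have hη : 0 ≤ η := hε.trans hεη
  have hiter := IteratedBound.of_decoupling hC hη hδ hkp hdec
    (fun l hl hlk ↦ hdec_lt l (mem_Ioo.2 ⟨hl, hlk⟩)) r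
  obtain ⟨l, hl, hlk, hgain⟩ := exists_le_gainExponent hk r
  set M := k.factorial ^ (r + 1)
  have hM : 0 < M := pow_pos k.factorial_pos _
  refine DecouplingExponent.of_bilinearDecoupling (T := k ^ (r + 1) * M)
    (K := C ^ (r + 1) * (p : ℝ) ^ (M : ℝ)) hlk (hε.trans (le_max_right _ _)) (by positivity)
    (hp.trans (natCast_prime_rpow_mono (le_max_right _ _))) fun n hn ↦ ?_
  obtain ⟨b, hb, hMb, hbn, hnb⟩ := exists_multiple_le hM (pow_pos (by lia) _) hn
  obtain ⟨a, hab⟩ : l ∣ (k - l + 1) * b :=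
    ((Nat.dvd_factorial hl hlk.le).trans ((dvd_pow_self _ r.succ_ne_zero).trans hMb)).mul_left _
  refine (hiter.bilinearDecoupling_one_one hC₀ hl hlk hb hMb hbn hab.symm).mono ?_
  rw [mul_assoc (C ^ (r + 1)), ← Real.rpow_add natCast_prime_pos]
  refine mul_le_mul_of_nonneg_left (natCast_prime_rpow_mono ?_) (by positivity)
  have hbgain : ((2 * (triangle k : ℝ) + 1) * (k + 1) + 1) * b ≤ η * gainExponent k r l * b := by
    gcongr
    exact hr.trans (mul_le_mul hεη hgain (by positivity) hη)
  have hσn : (σ + r * δ) * n ≤ b + M := by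
    refine (mul_le_mul_of_nonneg_right hσ n.cast_nonneg).trans ?_
    rwa [one_div_mul_eq_div, ← Nat.cast_pow]
  have hmax : (η - σ) * n ≤ max (η - σ) ε * n := by
    gcongr
    exact le_max_left _ _
  linarith

lemma of_forall_sub_step {P : ℝ → Prop} {ε σ η : ℝ} (hσ : 0 < σ) (hεη : ε ≤ η) (h : P η)
    (hstep : ∀ x ≥ ε, P x → P (max (x - σ) ε)) : P ε := by
  have hiter (i : ℕ) : P (max (η - i * σ) ε) := by
    induction i with
    | zero => simpa [hεη] using h
    | succ i ih =>
      convert hstep _ (le_max_right _ _) ih using 1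
      rw [← max_sub_sub_right, max_assoc, max_eq_right (sub_le_self ε hσ.le)]
      push_cast
      ring_nf
  obtain ⟨i, hi⟩ := exists_nat_ge ((η - ε) / σ)
  rw [div_le_iff₀ hσ] at hi
  simpa [max_eq_right (show η - i * σ ≤ ε by linarith)] using hiter i

theorem eventually_decouplingExponent {k : ℕ} (hk : 0 < k) {ε : ℝ} (hε : 0 < ε) :
    ∀ᶠ p : ℕ in Filter.atTop, ∀ [Fact p.Prime], DecouplingExponent p k ε := by
  induction k using Nat.strong_induction_on generalizing ε with
  | _ k ih =>
  obtain rfl | hk₂ : k = 1 ∨ 2 ≤ k := by lia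
  · exact .of_forall fun p _ ↦ decouplingExponent_one hε.le
  have hk₀ : (0 : ℝ) < k := Nat.cast_pos.2 hk
  obtain ⟨r, hr⟩ := exists_nat_ge (((2 * (triangle k : ℝ) + 1) * (k + 1) + 1) * k / ε)
  have hr₀ : (0 : ℝ) < r := lt_of_lt_of_le (by positivity) hr
  rw [div_le_iff₀ hε, mul_comm _ ε, ← le_div_iff₀ hk₀, mul_div_assoc] at hr
  set σ : ℝ := 1 / (k : ℝ) ^ (r + 1) / 2 with hσ
  have hσ₀ : 0 < σ := by positivity
  have hσr : σ + r * (σ / r) ≤ 1 / (k : ℝ) ^ (r + 1) := by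
    rw [mul_div_cancel₀ _ hr₀.ne', hσ, add_halves]
  have hlarge : ∀ᶠ p : ℕ in Filter.atTop, 2 * (4 : ℝ) ^ triangle k ≤ (p : ℝ) ^ ε :=
    ((tendsto_rpow_atTop hε).comp tendsto_natCast_atTop_atTop).eventually_ge_atTop _
  filter_upwards [(Ioo 0 k).eventually_all.2 fun l hl ↦
      ih l (mem_Ioo.1 hl).2 (mem_Ioo.1 hl).1 (div_pos hσ₀ hr₀),
    hlarge, Filter.eventually_gt_atTop k] with p hlt hp hkp _
  refine of_forall_sub_step (η := 2 * triangle k + ε) hσ₀ (le_add_of_nonneg_left (by positivity))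
    ((decouplingExponent_two_mul_triangle hk).mono (by linarith)) fun η hη h ↦ ?_
  exact h.improve hk₂ hkp hε.le hη (by positivity) hr hσr hp fun l hl ↦ hlt l hl

end Iteration

section LatticeChar

lemma addChar_sum_eq_prod {A M κ : Type*} [AddCommMonoid A] [CommMonoid M] (ψ : AddChar A M)
    (T : Finset κ) (u : κ → A) : ψ (∑ i ∈ T, u i) = ∏ i ∈ T, ψ (u i) :=
  map_prod ψ.toMonoidHom (fun i ↦ Multiplicative.ofAdd (u i)) T

variable {ι : Type*} [Fintype ι] {Q : ℕ} [NeZero Q]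

/-- The character `v ↦ e(α · v / Q)` of the lattice `ℤ ^ ι` with frequency `α`. -/
noncomputable def latticeChar (α : ι → ZMod Q) : AddChar (ι → ℤ) ℂ where
  toFun v := ZMod.stdAddChar (∑ j, α j * (v j : ZMod Q))
  map_zero_eq_one' := by simp
  map_add_eq_mul' u v := by
    simp only [Pi.add_apply, Int.cast_add, mul_add, sum_add_distrib, AddChar.map_add_eq_mul]

lemma latticeChar_apply (α : ι → ZMod Q) (v : ι → ℤ) :
    latticeChar α v = ZMod.stdAddChar (∑ j, α j * (v j : ZMod Q)) := rfl

lemma norm_latticeChar (α : ι → ZMod Q) (v : ι → ℤ) : ‖latticeChar α v‖ = 1 := by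
  rw [latticeChar_apply, AddChar.norm_apply]

lemma conj_latticeChar (α : ι → ZMod Q) (v : ι → ℤ) :
    (starRingEnd ℂ) (latticeChar α v) = latticeChar α (-v) := by
  simp only [latticeChar_apply, ← AddChar.map_neg_eq_conj, Pi.neg_apply, Int.cast_neg, mul_neg,
    sum_neg_distrib]

lemma sum_latticeChar [DecidableEq ι] (v : ι → ℤ) :
    ∑ α : ι → ZMod Q, latticeChar α v
      = if ∀ j, (v j : ZMod Q) = 0 then (Fintype.card (ι → ZMod Q) : ℂ) else 0 := by
  calc ∑ α : ι → ZMod Q, latticeChar α v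
      = ∑ α : ι → ZMod Q, ∏ j, ZMod.stdAddChar (α j * (v j : ZMod Q)) := by
        simp only [latticeChar_apply, addChar_sum_eq_prod]
    _ = ∏ j, ∑ a : ZMod Q, ZMod.stdAddChar (a * (v j : ZMod Q)) := by
        rw [prod_univ_sum, Fintype.piFinset_univ]
    _ = ∏ j, if (v j : ZMod Q) = 0 then (Q : ℂ) else 0 := by
        simp only [AddChar.sum_mulShift _ (ZMod.isPrimitive_stdAddChar Q), ZMod.card, Nat.cast_ite,
          Nat.cast_zero]
    _ = if ∀ j, (v j : ZMod Q) = 0 then (Fintype.card (ι → ZMod Q) : ℂ) else 0 := by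
        simp [Finset.prod_ite_zero]

end LatticeChar

section UniformWeight

/-- The weight of the uniform probability measure on a finite type. -/
noncomputable def uniformWeight (Ω : Type*) [Fintype Ω] : Ω → ℝ := fun _ ↦ (Fintype.card Ω : ℝ)⁻¹

lemma uniformWeight_nonneg (Ω : Type*) [Fintype Ω] : 0 ≤ uniformWeight Ω :=
  fun _ ↦ inv_nonneg.2 (Nat.cast_nonneg _)

lemma sum_uniformWeight (Ω : Type*) [Fintype Ω] [Nonempty Ω] : ∑ ω, uniformWeight Ω ω = 1 := by
  simp [uniformWeight]

variable {ι : Type*} [Fintype ι] [DecidableEq ι] {Q : ℕ} [NeZero Q]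

lemma sum_uniformWeight_mul_latticeChar (v : ι → ℤ) :
    ∑ α, (uniformWeight (ι → ZMod Q) α : ℂ) * latticeChar α v
      = if ∀ j, (v j : ZMod Q) = 0 then 1 else 0 := by
  simp only [uniformWeight, ← mul_sum, sum_latticeChar, mul_ite, mul_zero]
  congr 1
  rw [Complex.ofReal_inv, Complex.ofReal_natCast, inv_mul_cancel₀]
  exact Nat.cast_ne_zero.2 Fintype.card_ne_zero

lemma sum_uniformWeight_mul_eq_card {κ : Type*} (T : Finset κ) (v : κ → ι → ℤ)
    {G : (ι → ZMod Q) → ℝ} (hG : ∀ α, (G α : ℂ) = ∑ i ∈ T, latticeChar α (v i)) :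
    ∑ α, uniformWeight (ι → ZMod Q) α * G α
      = #{i ∈ T | ∀ j, (v i j : ZMod Q) = 0} := by
  apply Complex.ofReal_injective
  simp only [Complex.ofReal_sum, Complex.ofReal_mul, hG, mul_sum]
  rw [sum_comm]
  simp only [sum_uniformWeight_mul_latticeChar, sum_boole, Complex.ofReal_natCast]

end UniformWeight

section MomentCurve

lemma intCast_zmod_eq_zero_iff_of_abs_lt {Q : ℕ} {v : ℤ} (hv : |v| < Q) :
    (v : ZMod Q) = 0 ↔ v = 0 := by
  refine ⟨fun h ↦ Int.eq_zero_of_abs_lt_dvd ((ZMod.intCast_zmod_eq_zero_iff_dvd v Q).1 h) hv, ?_⟩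
  rintro rfl
  exact Int.cast_zero

lemma abs_sum_sub_le {ι : Type*} [Fintype ι] {x y : ι → ℤ} {B : ℤ} (hx₀ : ∀ i, 0 ≤ x i)
    (hxB : ∀ i, x i ≤ B) (hy₀ : ∀ i, 0 ≤ y i) (hyB : ∀ i, y i ≤ B) :
    |∑ i, (x i - y i)| ≤ Fintype.card ι * B := by
  refine (abs_sum_le_sum_abs _ _).trans ?_
  rw [← nsmul_eq_mul]
  exact sum_le_card_nsmul _ _ _ fun i _ ↦
    abs_sub_le_of_nonneg_of_le (hx₀ i) (hxB i) (hy₀ i) (hyB i)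

lemma pow_le_pow_of_mem_Icc {M j k : ℕ} {u : ℤ} (hu : u ∈ Icc 1 (M : ℤ)) (hj : j ≤ k) :
    u ^ j ≤ (M : ℤ) ^ k := by
  obtain ⟨hu₁, huM⟩ := mem_Icc.1 hu
  exact (pow_le_pow_left₀ (by lia) huM j).trans (pow_le_pow_right₀ (hu₁.trans huM) hj)

variable {k s Q : ℕ}

/-- The moment curve `x ↦ (x, x ^ 2, …, x ^ k)`. -/
def momentCurve (k : ℕ) (x : ℤ) : Fin k → ℤ := fun j ↦ x ^ (j.val + 1)

lemma sum_momentCurve_sub_apply (x y : Fin s → ℤ) (j : Fin k) :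
    (∑ i, (momentCurve k (x i) - momentCurve k (y i))) j
      = ∑ i, (x i ^ (j.val + 1) - y i ^ (j.val + 1)) := by
  simp only [Finset.sum_apply, Pi.sub_apply, momentCurve]

lemma abs_sum_momentCurve_sub_le {M : ℕ} {x y : Fin s → ℤ} (hx : ∀ i, x i ∈ Icc 1 (M : ℤ))
    (hy : ∀ i, y i ∈ Icc 1 (M : ℤ)) (j : Fin k) :
    |(∑ i, (momentCurve k (x i) - momentCurve k (y i))) j| ≤ (s * M ^ k : ℕ) := by
  have hnonneg {u : ℤ} (hu : u ∈ Icc 1 (M : ℤ)) : 0 ≤ u ^ (j.val + 1) :=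
    pow_nonneg (by linarith [(mem_Icc.1 hu).1]) _
  have h := abs_sum_sub_le (fun i ↦ hnonneg (hx i)) (fun i ↦ pow_le_pow_of_mem_Icc (hx i) j.2)
    (fun i ↦ hnonneg (hy i)) (fun i ↦ pow_le_pow_of_mem_Icc (hy i) j.2)
  rw [sum_momentCurve_sub_apply]
  simpa only [Fintype.card_fin, Nat.cast_mul, Nat.cast_pow] using h

variable [NeZero Q]

/-- The phases of the Vinogradov exponential sum at frequencies in `(1 / Q)ℤ`. -/
noncomputable def momentPhase (k Q : ℕ) [NeZero Q] (x : ℤ) (α : Fin k → ZMod Q) : ℂ :=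
  latticeChar α (momentCurve k x)

lemma prod_momentPhase_mul_prod_conj (x y : Fin s → ℤ) (α : Fin k → ZMod Q) :
    (∏ i, momentPhase k Q (x i) α) * ∏ i, (starRingEnd ℂ) (momentPhase k Q (y i) α)
      = latticeChar α (∑ i, (momentCurve k (x i) - momentCurve k (y i))) := by
  simp only [momentPhase, conj_latticeChar, ← addChar_sum_eq_prod, ← AddChar.map_add_eq_mul,
    ← sum_add_distrib, sub_eq_add_neg]

lemma orthogonalMod_momentPhase {R : Type*} [CommRing R] {M : ℕ} (hQ : s * M ^ k < Q) (d : R) :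
    OrthogonalMod s d (fun j : Fin k ↦ (X : R[X]) ^ (j.val + 1)) (uniformWeight _)
      (Icc 1 (M : ℤ)) (momentPhase k Q) := by
  intro x y hx hy hne j
  simp only [correlation, prod_momentPhase_mul_prod_conj, sum_uniformWeight_mul_latticeChar,
    ne_eq, ite_eq_right_iff, one_ne_zero, imp_false, not_not] at hne
  have hzero := (intCast_zmod_eq_zero_iff_of_abs_lt
    ((abs_sum_momentCurve_sub_le hx hy j).trans_lt (Nat.cast_lt.2 hQ))).1 (hne j)
  rw [sum_momentCurve_sub_apply] at hzero
  have hcast := congrArg (Int.cast : ℤ → R) hzero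
  push_cast at hcast
  simp only [eval_pow, eval_X, hcast, dvd_zero]

lemma card_residueClass_Icc_le_one {M N : ℕ} (h : M ≤ N) (c : ZMod N) :
    #(residueClass N c (Icc 1 (M : ℤ))) ≤ 1 := by
  refine card_le_one.2 fun x hx y hy ↦ ?_
  simp only [mem_residueClass, mem_Icc] at hx hy
  have hdvd := (ZMod.intCast_eq_intCast_iff_dvd_sub y x N).1 (hy.2.trans hx.2.symm)
  have := Int.eq_zero_of_abs_lt_dvd hdvd (by rw [abs_lt]; lia)
  lia

lemma moment_momentPhase_singleton (s : ℕ) (x : ℤ) :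
    moment s (uniformWeight _) (momentPhase k Q) {x} = 1 := by
  simp [moment, expSum, momentPhase, norm_latticeChar, sum_uniformWeight]

lemma sqNorm_momentPhase_le_card (hs : s ≠ 0) {S : Finset ℤ} (hS : #S ≤ 1) :
    sqNorm s (uniformWeight _) (momentPhase k Q) S ≤ #S := by
  rcases Nat.le_one_iff_eq_zero_or_eq_one.1 hS with hS | hS
  · rw [card_eq_zero.1 hS, sqNorm_empty _ hs, card_empty, Nat.cast_zero]
  · obtain ⟨x, rfl⟩ := card_eq_one.1 hS
    rw [sqNorm, moment_momentPhase_singleton, Real.one_rpow, card_singleton, Nat.cast_one]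

lemma squareSum_momentPhase_le {M N : ℕ} [NeZero N] (hs : s ≠ 0) (h : M ≤ N) :
    squareSum N s (uniformWeight _) (momentPhase k Q) (Icc 1 (M : ℤ)) ≤ M := by
  refine (sum_le_sum fun c _ ↦
    sqNorm_momentPhase_le_card hs (card_residueClass_Icc_le_one h c)).trans_eq ?_
  rw [← Nat.cast_sum]
  unfold residueClass
  rw [sum_card_fiberwise_eq_card_filter]
  simp

lemma Decoupling.moment_momentPhase_le {p : ℕ} [Fact p.Prime] {n M : ℕ} {D : ℝ}
    (h : Decoupling p k n D) (hk : 0 < k) (hD : 0 ≤ D) (hM : M ≤ p ^ n)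
    (hQ : triangle k * M ^ k < Q) :
    moment (triangle k) (uniformWeight _) (momentPhase k Q) (Icc 1 (M : ℤ))
      ≤ D * (M : ℝ) ^ triangle k := by
  have hφ : ReducesToMomentCurve fun j : Fin k ↦ (X : ℤ_[p][X]) ^ (j.val + 1) := fun j ↦ by simp
  refine (h hφ (uniformWeight_nonneg _) (orthogonalMod_momentPhase hQ _)).trans ?_
  have := squareSum_nonneg (N := p ^ n) (s := triangle k) (momentPhase k Q) (Icc 1 (M : ℤ))
    (uniformWeight_nonneg _)
  gcongr
  exact squareSum_momentPhase_le (triangle_pos hk).ne' hM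

theorem vinogradov_mean_value (hk : 0 < k) {ε : ℝ} (hε : 0 < ε) :
    ∃ C > 0, ∀ (M Q : ℕ) [NeZero Q], M ≠ 0 → triangle k * M ^ k < Q →
      moment (triangle k) (uniformWeight _) (momentPhase k Q) (Icc 1 (M : ℤ))
        ≤ C * (M : ℝ) ^ (triangle k + ε) := by
  obtain ⟨p, hp, hdec⟩ := ((Nat.frequently_atTop_iff_infinite.2
    Nat.infinite_setOfPred_prime).and_eventually (eventually_decouplingExponent hk hε)).exists
  have : Fact p.Prime := ⟨hp⟩
  obtain ⟨C, hC, hdec⟩ := ((Filter.eventually_gt_atTop 0).and hdec.eventually).exists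
  have hp₀ : (0 : ℝ) < p := natCast_prime_pos
  refine ⟨C * (p : ℝ) ^ ε, by positivity, fun M Q _ hM hQ ↦ ?_⟩
  set n := Nat.log p M + 1
  have hMn : M ≤ p ^ n := (Nat.lt_pow_succ_log_self hp.one_lt M).le
  have hnM : p ^ n ≤ p * M := by
    rw [pow_succ']
    exact Nat.mul_le_mul_left p (Nat.pow_log_le_self p hM)
  have hpow : (p : ℝ) ^ (ε * n) ≤ (p : ℝ) ^ ε * (M : ℝ) ^ ε := by
    rw [mul_comm ε, Real.rpow_natCast_mul hp₀.le, ← Real.mul_rpow hp₀.le M.cast_nonneg]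
    exact Real.rpow_le_rpow (by positivity) (by exact_mod_cast hnM) hε.le
  have hM₀ : (0 : ℝ) < M := by positivity
  calc moment (triangle k) (uniformWeight _) (momentPhase k Q) (Icc 1 (M : ℤ))
      ≤ C * (p : ℝ) ^ (ε * n) * (M : ℝ) ^ triangle k :=
        (hdec n).moment_momentPhase_le hk (by positivity) hMn hQ
    _ ≤ C * ((p : ℝ) ^ ε * (M : ℝ) ^ ε) * (M : ℝ) ^ triangle k := by gcongr
    _ = C * (p : ℝ) ^ ε * (M : ℝ) ^ (triangle k + ε) := by
        rw [Real.rpow_add hM₀, Real.rpow_natCast]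
        ring

end MomentCurve

section TangentEnergy

lemma sum_filter_eq_zero_of_sum_mul_pow_eq_zero {ι R : Type*} [Fintype ι] [CommRing R]
    [IsDomain R] [DecidableEq R] {c z : ι → R}
    (h : ∀ j < Fintype.card ι, ∑ i, c i * z i ^ j = 0) (v : R) : ∑ i with z i = v, c i = 0 := by
  by_cases hv : v ∈ univ.image z
  swap
  · exact sum_eq_zero fun i hi ↦ absurd (mem_image.2 ⟨i, mem_univ i, (mem_filter.1 hi).2⟩) hv
  have hpoly (P : R[X]) (hP : P.natDegree < Fintype.card ι) : ∑ i, c i * P.eval (z i) = 0 := by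
    simp only [eval_eq_sum_range, mul_sum]
    rw [sum_comm]
    refine sum_eq_zero fun j hj ↦ ?_
    simp only [mul_left_comm (c _), ← mul_sum]
    rw [h j ((Nat.lt_succ_iff.1 (mem_range.1 hj)).trans_lt hP), mul_zero]
  set V := (univ.image z).erase v
  have hnodal (i : ι) (hi : z i ≠ v) : (Lagrange.nodal V id).eval (z i) = 0 :=
    Lagrange.eval_nodal_at_node (v := id) (mem_erase.2 ⟨hi, mem_image_of_mem z (mem_univ i)⟩)
  have hdeg : (Lagrange.nodal V id).natDegree < Fintype.card ι := by
    rw [Lagrange.natDegree_nodal]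
    exact (card_erase_lt_of_mem hv).trans_le card_image_le
  have hsum : (∑ i with z i = v, c i) * (Lagrange.nodal V id).eval v = 0 := by
    rw [← hpoly _ hdeg, sum_mul, sum_filter]
    refine sum_congr rfl fun i _ ↦ ?_
    split_ifs with hi
    · rw [hi]
    · rw [hnodal i hi, mul_zero]
  refine (mul_eq_zero.1 hsum).resolve_right (Lagrange.eval_nodal_not_at_node fun u hu ↦ ?_)
  exact (ne_of_mem_erase hu).symm

section FiberRep

variable {ι β : Type*} [Nonempty ι]

/-- A representative of the fibre of `z` through `i`, depending only on that fibre. -/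
noncomputable def fiberRep (z : ι → β) (i : ι) : ι := Function.invFun z (z i)

lemma apply_fiberRep (z : ι → β) (i : ι) : z (fiberRep z i) = z i :=
  Function.invFun_eq ⟨i, rfl⟩

lemma fiberRep_eq_of_apply_eq {z : ι → β} {i i' : ι} (h : z i = z i') :
    fiberRep z i = fiberRep z i' := congrArg (Function.invFun z) h

variable [Fintype ι] [DecidableEq β]

lemma eq_of_sum_fiber_eq {G : Type*} [AddCommGroup G] {z : ι → β} {c c' : ι → G}
    (hsum : ∀ v, ∑ i with z i = v, c i = ∑ i with z i = v, c' i)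
    (hne : ∀ i, fiberRep z i ≠ i → c i = c' i) : c = c' := by
  classical
  funext i
  by_cases hi : fiberRep z i = i
  swap
  · exact hne i hi
  have hmem : i ∈ ({i' | z i' = z i} : Finset ι) := by simp
  have h := hsum (z i)
  rw [← add_sum_erase _ _ hmem, ← add_sum_erase _ c' hmem] at h
  refine add_right_cancel (h.trans (congrArg _ (sum_congr rfl fun i' hi' ↦ (hne i' ?_).symm)))
  obtain ⟨hi'i, hi'⟩ := mem_erase.1 hi'
  rw [fiberRep_eq_of_apply_eq (mem_filter.1 hi').2, hi]
  exact hi'i.symm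

end FiberRep

section FiberBalanced

variable {ι : Type*} [Fintype ι]

/-- A family of triples `(z, m, m')` in which the differences `m - m'` cancel along every fibre
of `z`. -/
def FiberBalanced (t : ι → ℤ × ℤ × ℤ) : Prop :=
  ∀ v, ∑ i with (t i).1 = v, ((t i).2.1 - (t i).2.2) = 0

variable [Nonempty ι]

open Classical in
/-- An encoding of families of triples `(z, m, m')` that is injective on balanced families: the
values of `z` are needed only at representatives of its fibres, where `m` can be omitted. -/
noncomputable def encodeTriples (t : ι → ℤ × ℤ × ℤ) : (ι → ι) × (ι → ℤ) × (ι → ℤ) :=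
  (fiberRep fun i ↦ (t i).1, fun i ↦ (t i).2.2,
    fun i ↦ if fiberRep (fun i ↦ (t i).1) i = i then (t i).1 else (t i).2.1)

lemma injOn_encodeTriples :
    Set.InjOn encodeTriples {t : ι → ℤ × ℤ × ℤ | FiberBalanced t} := by
  intro t ht t' ht' h
  simp only [encodeTriples, Prod.mk.injEq] at h
  obtain ⟨hrep, hm', hcode⟩ := h
  rw [← hrep] at hcode
  set σ := fiberRep fun i ↦ (t i).1
  have hσ (i : ι) : σ (σ i) = σ i :=
    fiberRep_eq_of_apply_eq (apply_fiberRep (fun i ↦ (t i).1) i)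
  have hz (i : ι) : (t i).1 = (t' i).1 := by
    have hcode_rep := congrFun hcode (σ i)
    simp only [hσ, if_true] at hcode_rep
    have hz' := apply_fiberRep (fun i ↦ (t' i).1) i
    rw [← hrep] at hz'
    exact (apply_fiberRep (fun i ↦ (t i).1) i).symm.trans (hcode_rep.trans hz')
  have hdiff : (fun i ↦ (t i).2.1 - (t i).2.2) = fun i ↦ (t' i).2.1 - (t' i).2.2 := by
    refine eq_of_sum_fiber_eq (z := fun i ↦ (t i).1) (fun v ↦ ?_) fun i hi ↦ ?_
    · rw [ht v]
      simp only [hz]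
      exact (ht' v).symm
    · have hcode_i := congrFun hcode i
      simp only [σ, if_neg hi] at hcode_i
      exact congrArg₂ (· - ·) hcode_i (congrFun hm' i)
  funext i
  have hm'_i := congrFun hm' i
  have hdiff_i := congrFun hdiff i
  exact Prod.ext (hz i) (Prod.ext (by lia) hm'_i)

open Classical in
lemma card_filter_fiberBalanced_le {Z B : Finset ℤ} (hZB : Z ⊆ B) :
    #{t ∈ Fintype.piFinset fun _ : ι ↦ Z ×ˢ B ×ˢ B | FiberBalanced t}
      ≤ (Fintype.card ι * #B ^ 2) ^ Fintype.card ι := by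
  let codes : Finset ((ι → ι) × (ι → ℤ) × (ι → ℤ)) :=
    univ ×ˢ (Fintype.piFinset fun _ ↦ B) ×ˢ Fintype.piFinset fun _ ↦ B
  refine (card_le_card_of_injOn (t := codes) encodeTriples (fun t ht ↦ ?_)
    (injOn_encodeTriples.mono fun t ht ↦ (mem_filter.1 ht).2)).trans_eq ?_
  · simp only [coe_filter, Fintype.mem_piFinset, mem_product, Set.mem_ofPred_eq] at ht
    simp only [codes, encodeTriples, coe_product, Set.mem_prod, mem_coe, mem_univ, true_and,
      Fintype.mem_piFinset]
    refine ⟨fun i ↦ (ht.1 i).2.2, fun i ↦ ?_⟩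
    split_ifs
    exacts [hZB (ht.1 i).1, (ht.1 i).2.1]
  · simp only [codes, card_product, card_univ, Fintype.card_fun, Fintype.card_piFinset, prod_const]
    ring

end FiberBalanced

variable {k Q : ℕ}

/-- The tangent vector at `z` of the moment curve. -/
def momentTangent (k : ℕ) (z : ℤ) : Fin k → ℤ := fun j ↦ (j.val + 1) * z ^ j.val

/-- The frequency attached to a triple `(z, m, m')` in the expansion of the tangent energy. -/
def tangentVector (k : ℕ) (t : ℤ × ℤ × ℤ) : Fin k → ℤ := (t.2.1 - t.2.2) • momentTangent k t.1

lemma sum_tangentVector_apply {ι : Type*} [Fintype ι] (t : ι → ℤ × ℤ × ℤ) (j : Fin k) :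
    (∑ i, tangentVector k (t i)) j
      = (j.val + 1) * ∑ i, ((t i).2.1 - (t i).2.2) * (t i).1 ^ j.val := by
  simp only [Finset.sum_apply, tangentVector, momentTangent, Pi.smul_apply, smul_eq_mul, mul_sum,
    mul_left_comm]

lemma fiberBalanced_of_sum_tangentVector_eq_zero {t : Fin k → ℤ × ℤ × ℤ}
    (h : ∑ i, tangentVector k (t i) = 0) : FiberBalanced t := by
  refine sum_filter_eq_zero_of_sum_mul_pow_eq_zero fun j hj ↦ ?_
  rw [Fintype.card_fin] at hj
  have hj₀ := congrFun h ⟨j, hj⟩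
  rw [sum_tangentVector_apply, Pi.zero_apply] at hj₀
  exact (mul_eq_zero.1 hj₀).resolve_left (by positivity)

lemma abs_sum_tangentVector_le {N H : ℕ} {t : Fin k → ℤ × ℤ × ℤ}
    (ht : ∀ i, t i ∈ Icc 1 (N : ℤ) ×ˢ Icc 1 (H : ℤ) ×ˢ Icc 1 (H : ℤ)) (j : Fin k) :
    |(∑ i, tangentVector k (t i)) j| ≤ (k * (H * (k * N ^ k)) : ℕ) := by
  have hbound {z m : ℤ} (hz : z ∈ Icc 1 (N : ℤ)) (hm : m ∈ Icc 1 (H : ℤ)) :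
      0 ≤ m * momentTangent k z j ∧ m * momentTangent k z j ≤ H * (k * N ^ k) := by
    have hz₀ : 0 ≤ z := by linarith [(mem_Icc.1 hz).1]
    obtain ⟨hm₁, hmH⟩ := mem_Icc.1 hm
    have : 0 ≤ m := by linarith
    have hjk : (j.val + 1 : ℤ) ≤ k := by exact_mod_cast j.2
    unfold momentTangent
    refine ⟨by positivity, ?_⟩
    gcongr
    exact pow_le_pow_of_mem_Icc hz j.2.le
  have hm (i : Fin k) := hbound (mem_product.1 (ht i)).1 (mem_product.1 (mem_product.1 (ht i)).2).1
  have hm' (i : Fin k) := hbound (mem_product.1 (ht i)).1 (mem_product.1 (mem_product.1 (ht i)).2).2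
  have h := abs_sum_sub_le (fun i ↦ (hm i).1) (fun i ↦ (hm i).2) (fun i ↦ (hm' i).1)
    fun i ↦ (hm' i).2
  simp only [Finset.sum_apply, tangentVector, Pi.smul_apply, smul_eq_mul, sub_mul]
  rw [Fintype.card_fin] at h
  exact_mod_cast h

variable [NeZero Q]

/-- The total energy, over `z ∈ Z`, of the linear exponential sums over `B` in the direction of the
tangent to the moment curve at `z`. -/
noncomputable def tangentEnergy (Z B : Finset ℤ) (α : Fin k → ZMod Q) : ℝ :=
  ∑ z ∈ Z, ‖∑ m ∈ B, latticeChar α (m • momentTangent k z)‖ ^ 2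

lemma tangentEnergy_nonneg (Z B : Finset ℤ) (α : Fin k → ZMod Q) : 0 ≤ tangentEnergy Z B α := by
  unfold tangentEnergy
  positivity

lemma tangentEnergy_eq_sum (Z B : Finset ℤ) (α : Fin k → ZMod Q) :
    (tangentEnergy Z B α : ℂ) = ∑ t ∈ Z ×ˢ B ×ˢ B, latticeChar α (tangentVector k t) := by
  simp only [tangentEnergy, Complex.ofReal_sum, Complex.ofReal_pow, ← Complex.mul_conj', map_sum,
    sum_mul_sum, conj_latticeChar, ← AddChar.map_add_eq_mul, sum_product, tangentVector,
    sub_eq_add_neg, add_smul, neg_smul]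

lemma tangentEnergy_pow_eq_sum (Z B : Finset ℤ) (s : ℕ) (α : Fin k → ZMod Q) :
    ((tangentEnergy Z B α ^ s : ℝ) : ℂ) = ∑ t ∈ Fintype.piFinset fun _ : Fin s ↦ Z ×ˢ B ×ˢ B,
      latticeChar α (∑ i, tangentVector k (t i)) := by
  simp only [Complex.ofReal_pow, tangentEnergy_eq_sum, sum_pow', addChar_sum_eq_prod]

lemma sum_uniformWeight_mul_tangentEnergy_pow_le {N H : ℕ} (hk : 0 < k) (hNH : N ≤ H)
    (hQ : k * (H * (k * N ^ k)) < Q) :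
    ∑ α : Fin k → ZMod Q, uniformWeight _ α
        * tangentEnergy (Icc 1 (N : ℤ)) (Icc 1 (H : ℤ)) α ^ k ≤ ((k : ℝ) * H ^ 2) ^ k := by
  classical
  have : Nonempty (Fin k) := ⟨⟨0, hk⟩⟩
  rw [sum_uniformWeight_mul_eq_card _ _ (tangentEnergy_pow_eq_sum _ _ k)]
  have hcard := card_filter_fiberBalanced_le (ι := Fin k)
    (Icc_subset_Icc_right (Nat.cast_le.2 hNH) : Icc 1 (N : ℤ) ⊆ Icc 1 (H : ℤ))
  simp only [Fintype.card_fin, Int.card_Icc, add_sub_cancel_right, Int.toNat_natCast] at hcard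
  refine le_trans (Nat.cast_le.2 (card_le_card fun t ht ↦ ?_)) (by exact_mod_cast hcard)
  simp only [mem_filter, Fintype.mem_piFinset] at ht ⊢
  refine ⟨ht.1, fiberBalanced_of_sum_tangentVector_eq_zero (funext fun j ↦ ?_)⟩
  exact (intCast_zmod_eq_zero_iff_of_abs_lt
    ((abs_sum_tangentVector_le ht.1 j).trans_lt (Nat.cast_lt.2 hQ))).1 (ht.2 j)

end TangentEnergy

section Slice

variable {k s : ℕ}

/-- The solutions in `[1, N]` of the Vinogradov system without its linear equation. -/
noncomputable def sliceSolutions (s k N : ℕ) : Finset ((Fin s → ℤ) × (Fin s → ℤ)) :=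
  {q ∈ (Fintype.piFinset fun _ ↦ Icc 1 (N : ℤ)) ×ˢ Fintype.piFinset fun _ ↦ Icc 1 (N : ℤ) |
    ∀ j ∈ Icc 2 k, ∑ i, q.1 i ^ j = ∑ i, q.2 i ^ j}

lemma mem_sliceSolutions {N : ℕ} {q : (Fin s → ℤ) × (Fin s → ℤ)} :
    q ∈ sliceSolutions s k N ↔ ((∀ i, q.1 i ∈ Icc 1 (N : ℤ)) ∧ ∀ i, q.2 i ∈ Icc 1 (N : ℤ)) ∧
      ∀ j ∈ Icc 2 k, ∑ i, q.1 i ^ j = ∑ i, q.2 i ^ j := by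
  simp only [sliceSolutions, mem_filter, mem_product, Fintype.mem_piFinset]

lemma sum_momentCurve_add_sub {x y : Fin s → ℤ}
    (h : ∀ j ∈ Icc 2 k, ∑ i, x i ^ j = ∑ i, y i ^ j) (z : ℤ) :
    ∑ i, (momentCurve k (x i + z) - momentCurve k (y i + z))
      = (∑ i, (x i - y i)) • momentTangent k z := by
  funext j
  have hbinom : ∑ i, ((x i + z) ^ (j.val + 1) - (y i + z) ^ (j.val + 1))
      = ∑ m ∈ range (j.val + 1 + 1),
        (∑ i, (x i ^ m - y i ^ m)) * (z ^ (j.val + 1 - m) * ((j.val + 1).choose m : ℤ)) := by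
    simp only [add_pow, ← sum_sub_distrib, sum_mul, sub_mul, mul_assoc]
    exact sum_comm
  have hzero (m : ℕ) (hm : m ∈ range (j.val + 1 + 1)) (hm₁ : m ≠ 1) :
      ∑ i, (x i ^ m - y i ^ m) = 0 := by
    obtain rfl | hm₂ : m = 0 ∨ 2 ≤ m := by lia
    · simp
    · rw [sum_sub_distrib, h m (mem_Icc.2 ⟨hm₂, by have := mem_range.1 hm; lia⟩), sub_self]
  rw [sum_momentCurve_sub_apply, hbinom, sum_eq_single_of_mem 1 (by simp)
    fun m hm hm₁ ↦ by rw [hzero m hm hm₁, zero_mul]]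
  simp only [pow_one, Pi.smul_apply, momentTangent, smul_eq_mul, Nat.choose_one_right,
    add_tsub_cancel_right]
  push_cast
  ring

/-- Translating a solution of the incomplete system by `z` moves the defect of the linear equation
into the direction tangent to the moment curve at `z`, where it is cancelled by a pair of integers
`m, m'`. -/
def shiftSolution (L : ℤ) (q : ((Fin s → ℤ) × (Fin s → ℤ)) × (ℤ × ℤ)) :
    ((Fin s → ℤ) × (Fin s → ℤ)) × (ℤ × ℤ × ℤ) :=
  ((fun i ↦ q.1.1 i + q.2.1, fun i ↦ q.1.2 i + q.2.1),
    (q.2.1, L + q.2.2, L + q.2.2 + ∑ i, (q.1.1 i - q.1.2 i)))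

lemma injective_shiftSolution (L : ℤ) : Function.Injective (shiftSolution (s := s) L) := by
  rintro ⟨⟨x, y⟩, z, m⟩ ⟨⟨x', y'⟩, z', m'⟩ h
  simp only [shiftSolution, Prod.mk.injEq, funext_iff] at h
  obtain ⟨⟨hx, hy⟩, rfl, hm, -⟩ := h
  simp only [add_left_inj, add_right_inj] at hx hy hm
  rw [funext hx, funext hy, hm]

/-- The defect in the Vinogradov system of a pair of points, corrected by a tangent vector. -/
def tangentDefect (k : ℕ) (q : ((Fin s → ℤ) × (Fin s → ℤ)) × (ℤ × ℤ × ℤ)) : Fin k → ℤ :=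
  ∑ i, (momentCurve k (q.1.1 i) - momentCurve k (q.1.2 i)) + tangentVector k q.2

lemma tangentDefect_shiftSolution {x y : Fin s → ℤ}
    (h : ∀ j ∈ Icc 2 k, ∑ i, x i ^ j = ∑ i, y i ^ j) (L z m : ℤ) :
    tangentDefect k (shiftSolution L ((x, y), (z, m))) = 0 := by
  simp only [tangentDefect, shiftSolution, tangentVector, sum_momentCurve_add_sub h, ← add_smul]
  rw [sub_add_cancel_left, add_neg_cancel, zero_smul]

/-- The index set of the expansion of `‖expSum‖ ^ (2 * s) * tangentEnergy`. -/
noncomputable def shiftedBox (s M N H : ℕ) : Finset (((Fin s → ℤ) × (Fin s → ℤ)) × (ℤ × ℤ × ℤ)) :=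
  ((Fintype.piFinset fun _ ↦ Icc 1 (M : ℤ)) ×ˢ Fintype.piFinset fun _ ↦ Icc 1 (M : ℤ)) ×ˢ
    Icc 1 (N : ℤ) ×ˢ Icc 1 (H : ℤ) ×ˢ Icc 1 (H : ℤ)

lemma shiftSolution_mem_shiftedBox {N : ℕ} {x y : Fin s → ℤ} (hx : ∀ i, x i ∈ Icc 1 (N : ℤ))
    (hy : ∀ i, y i ∈ Icc 1 (N : ℤ)) {z m : ℤ} (hz : z ∈ Icc 1 (N : ℤ))
    (hm : m ∈ Icc 1 ((s * N : ℕ) : ℤ)) :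
    shiftSolution ((s * N : ℕ) : ℤ) ((x, y), (z, m)) ∈ shiftedBox s (2 * N) N (3 * (s * N)) := by
  simp only [mem_Icc] at hx hy hz hm
  have hdefect : |∑ i, (x i - y i)| ≤ (s * N : ℕ) := by
    have h := abs_sum_sub_le (fun i ↦ zero_le_one.trans (hx i).1) (fun i ↦ (hx i).2)
      (fun i ↦ zero_le_one.trans (hy i).1) fun i ↦ (hy i).2
    simpa using h
  obtain ⟨hlower, hupper⟩ := abs_le.1 hdefect
  simp only [shiftedBox, shiftSolution, mem_product, Fintype.mem_piFinset, mem_Icc]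
  exact ⟨⟨fun i ↦ by have := hx i; lia, fun i ↦ by have := hy i; lia⟩, hz, by lia, by lia⟩

lemma card_sliceSolutions_mul_le (s k N Q : ℕ) :
    #(sliceSolutions s k N) * (N * (s * N))
      ≤ #{q ∈ shiftedBox s (2 * N) N (3 * (s * N)) |
          ∀ j, (tangentDefect k q j : ZMod Q) = 0} := by
  calc #(sliceSolutions s k N) * (N * (s * N))
      = #(sliceSolutions s k N ×ˢ Icc 1 (N : ℤ) ×ˢ Icc 1 ((s * N : ℕ) : ℤ)) := by
        simp only [card_product, Int.card_Icc, add_sub_cancel_right, Int.toNat_natCast]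
    _ ≤ #{q ∈ shiftedBox s (2 * N) N (3 * (s * N)) |
          ∀ j, (tangentDefect k q j : ZMod Q) = 0} := by
      refine card_le_card_of_injOn (shiftSolution ((s * N : ℕ) : ℤ)) ?_
        (injective_shiftSolution _).injOn
      rintro ⟨⟨x, y⟩, z, m⟩ hq
      rw [mem_coe, mem_product, mem_product, mem_sliceSolutions] at hq
      obtain ⟨⟨⟨hx, hy⟩, hsol⟩, hz, hm⟩ := hq
      rw [mem_coe, mem_filter]
      refine ⟨shiftSolution_mem_shiftedBox hx hy hz hm, fun j ↦ ?_⟩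
      rw [tangentDefect_shiftSolution hsol, Pi.zero_apply, Int.cast_zero]

lemma sum_uniformWeight_mul_norm_expSum_mul_tangentEnergy (s k M N H Q : ℕ) [NeZero Q] :
    ∑ α, uniformWeight (Fin k → ZMod Q) α *
        (‖expSum (momentPhase k Q) (Icc 1 (M : ℤ)) α‖ ^ (2 * s) *
          tangentEnergy (Icc 1 (N : ℤ)) (Icc 1 (H : ℤ)) α)
      = #{q ∈ shiftedBox s M N H | ∀ j, (tangentDefect k q j : ZMod Q) = 0} := by
  convert sum_uniformWeight_mul_eq_card (shiftedBox s M N H) (tangentDefect k) fun α ↦ ?_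
  rw [Complex.ofReal_mul, norm_expSum_pow, tangentEnergy_eq_sum]
  simp only [prod_momentPhase_mul_prod_conj, shiftedBox, tangentDefect, AddChar.map_add_eq_mul,
    ← sum_product']
  rw [sum_mul_sum, ← sum_product']

lemma sum_mul_rpow_mul_rpow_le {Ω : Type*} [Fintype Ω] {w F G : Ω → ℝ} (hw : 0 ≤ w)
    (hw₁ : ∑ ω, w ω = 1) (hF : 0 ≤ F) (hG : 0 ≤ G) {a b : ℝ} (ha : 0 ≤ a) (hb : 0 ≤ b)
    (hab : a + b ≤ 1) {U V : ℝ} (hU : 0 < U) (hV : 0 < V) (hFU : ∑ ω, w ω * F ω ≤ U)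
    (hGV : ∑ ω, w ω * G ω ≤ V) : ∑ ω, w ω * (F ω ^ a * G ω ^ b) ≤ U ^ a * V ^ b := by
  have hmean (ω : Ω) : F ω ^ a * G ω ^ b
      ≤ U ^ a * V ^ b * (a * (F ω / U) + b * (G ω / V) + (1 - a - b)) := by
    have h := Real.geom_mean_le_arith_mean3_weighted ha hb (by linarith : 0 ≤ 1 - a - b)
      (div_nonneg (hF ω) hU.le) (div_nonneg (hG ω) hV.le) zero_le_one (by ring)
    rwa [Real.one_rpow, mul_one, mul_one, Real.div_rpow (hF ω) hU.le, Real.div_rpow (hG ω) hV.le,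
      div_mul_div_comm, div_le_iff₀' (by positivity)] at h
  calc ∑ ω, w ω * (F ω ^ a * G ω ^ b)
      ≤ ∑ ω, w ω * (U ^ a * V ^ b * (a * (F ω / U) + b * (G ω / V) + (1 - a - b))) :=
        sum_le_sum fun ω _ ↦ mul_le_mul_of_nonneg_left (hmean ω) (hw ω)
    _ = U ^ a * V ^ b * (a / U * ∑ ω, w ω * F ω + b / V * ∑ ω, w ω * G ω
          + (1 - a - b) * ∑ ω, w ω) := by
        simp only [mul_sum, ← sum_add_distrib]
        exact sum_congr rfl fun ω _ ↦ by ring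
    _ ≤ U ^ a * V ^ b * (a / U * U + b / V * V + (1 - a - b) * 1) := by
        rw [hw₁]
        gcongr
    _ = U ^ a * V ^ b := by
        rw [div_mul_cancel₀ _ hU.ne', div_mul_cancel₀ _ hV.ne']
        ring

lemma card_sliceSolutions_mul_le_of_moment_le {N Q : ℕ} [NeZero Q] {U : ℝ} (hk : 0 < k)
    (hs : 0 < s) (hst : (s : ℝ) / triangle k + (k : ℝ)⁻¹ ≤ 1) (hN : N ≠ 0)
    (hQ : k * (3 * (s * N) * (k * N ^ k)) < Q) (hU : 0 < U)
    (h : moment (triangle k) (uniformWeight _) (momentPhase k Q) (Icc 1 ((2 * N : ℕ) : ℤ)) ≤ U) :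
    (#(sliceSolutions s k N) : ℝ) * (N * (s * N))
      ≤ U ^ ((s : ℝ) / triangle k) * (k * (3 * (s * N)) ^ 2) := by
  have ht : (triangle k : ℝ) ≠ 0 := Nat.cast_ne_zero.2 (triangle_pos hk).ne'
  have hNH : N ≤ 3 * (s * N) :=
    (Nat.le_mul_of_pos_left N hs).trans (Nat.le_mul_of_pos_left _ three_pos)
  have hpow (x : ℝ) (hx : 0 ≤ x) :
      (x ^ (2 * triangle k)) ^ ((s : ℝ) / triangle k) = x ^ (2 * s) := by
    rw [← Real.rpow_natCast_mul hx, ← Real.rpow_natCast]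
    push_cast
    field_simp
  have hholder := sum_mul_rpow_mul_rpow_le (uniformWeight_nonneg _) (sum_uniformWeight _)
    (fun α ↦ by positivity) (fun α ↦ pow_nonneg (tangentEnergy_nonneg _ _ α) k) (by positivity)
    (by positivity) hst hU (by positivity) h (sum_uniformWeight_mul_tangentEnergy_pow_le hk hNH hQ)
  simp only [hpow _ (norm_nonneg _), Real.pow_rpow_inv_natCast (tangentEnergy_nonneg _ _ _) hk.ne',
    sum_uniformWeight_mul_norm_expSum_mul_tangentEnergy] at hholder
  rw [Real.pow_rpow_inv_natCast (by positivity) hk.ne'] at hholder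
  refine le_trans ?_ (hholder.trans_eq (by push_cast; ring))
  exact_mod_cast card_sliceSolutions_mul_le s k N Q

lemma div_triangle_add_inv_le_one (hk : 0 < k) (hs : (s : ℝ) ≤ ((k : ℝ) ^ 2 - 1) / 2) :
    (s : ℝ) / triangle k + (k : ℝ)⁻¹ ≤ 1 := by
  have hk₀ : (0 : ℝ) < k := Nat.cast_pos.2 hk
  rw [cast_triangle, ← one_div, div_add_div _ _ (by positivity) hk₀.ne', div_le_one (by positivity)]
  nlinarith

theorem exists_card_sliceSolutions_le (hk : 0 < k) (hs : 0 < s)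
    (hsk : (s : ℝ) ≤ ((k : ℝ) ^ 2 - 1) / 2) {ε : ℝ} (hε : 0 < ε) :
    ∃ C ≥ 0, ∀ N : ℕ, N ≠ 0 → (#(sliceSolutions s k N) : ℝ) ≤ C * (N : ℝ) ^ (s + ε) := by
  have ht : (0 : ℝ) < triangle k := Nat.cast_pos.2 (triangle_pos hk)
  have : (0 : ℝ) < s := Nat.cast_pos.2 hs
  obtain ⟨C, hC, hmean⟩ := vinogradov_mean_value hk (show 0 < ε * triangle k / s by positivity)
  refine ⟨C ^ ((s : ℝ) / triangle k) * 2 ^ (s + ε) * (9 * k * s), by positivity, fun N hN ↦ ?_⟩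
  have hN₀ : (0 : ℝ) < N := Nat.cast_pos.2 (Nat.pos_of_ne_zero hN)
  set Q := triangle k * (2 * N) ^ k + k * (3 * (s * N) * (k * N ^ k)) + 1
  have hcard := card_sliceSolutions_mul_le_of_moment_le hk hs (div_triangle_add_inv_le_one hk hsk)
    hN (by lia) (by positivity) (hmean (2 * N) Q (by lia) (by lia))
  have hpow : (C * ((2 * N : ℕ) : ℝ) ^ (triangle k + ε * triangle k / s)) ^ ((s : ℝ) / triangle k)
      = C ^ ((s : ℝ) / triangle k) * (2 ^ (s + ε) * (N : ℝ) ^ (s + ε)) := by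
    rw [Real.mul_rpow hC.le (by positivity), ← Real.rpow_mul (Nat.cast_nonneg _),
      ← Real.mul_rpow zero_le_two hN₀.le]
    push_cast
    congr 2
    field_simp
  rw [hpow] at hcard
  refine le_of_mul_le_mul_right (hcard.trans_eq ?_) (by positivity : (0 : ℝ) < N * (s * N))
  ring

lemma vinogradovSliceCount_one_le {X : ℝ} (hX : 0 ≤ X) :
    vinogradovSliceCount s k 1 X ≤ #(sliceSolutions s k ⌊X⌋₊) := by
  unfold vinogradovSliceCount
  rw [← Set.ncard_coe_finset]
  refine Set.ncard_le_ncard (fun q hq ↦ ?_) (finite_toSet _)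
  obtain ⟨hx, hy, hsol⟩ := hq
  have hbox {u : ℤ} (hu : 1 ≤ u ∧ (u : ℝ) ≤ X) : u ∈ Icc 1 (⌊X⌋₊ : ℤ) := by
    rw [Int.natCast_floor_eq_floor hX]
    exact mem_Icc.2 ⟨hu.1, Int.le_floor.2 hu.2⟩
  refine mem_sliceSolutions.2 ⟨⟨fun i ↦ hbox (hx i), fun i ↦ hbox (hy i)⟩, fun j hj ↦ ?_⟩
  obtain ⟨hj₂, hjk⟩ := mem_Icc.1 hj
  exact hsol j (mem_Icc.2 ⟨by lia, hjk⟩) (by lia)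

end Slice

end VinogradovMeanValue

theorem diagonal_bound_missing_linear_slice
    (s k : ℕ) (hk : 3 ≤ k) (hs1 : 1 ≤ s) (hs2 : (s : ℝ) ≤ ((k : ℝ) ^ 2 - 1) / 2)
    (ε : ℝ) (hε : 0 < ε) :
    ∃ C X₀ : ℝ, ∀ X : ℝ, X₀ ≤ X →
      (vinogradovSliceCount s k 1 X : ℝ) ≤ C * X ^ ((s : ℝ) + ε) := by
  obtain ⟨C, hC, hbound⟩ := VinogradovMeanValue.exists_card_sliceSolutions_le
    (by lia : 0 < k) hs1 hs2 hε
  refine ⟨C, 1, fun X hX ↦ ?_⟩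
  have hX₀ : 0 ≤ X := zero_le_one.trans hX
  calc (vinogradovSliceCount s k 1 X : ℝ)
      ≤ #(VinogradovMeanValue.sliceSolutions s k ⌊X⌋₊) :=
        Nat.cast_le.2 (VinogradovMeanValue.vinogradovSliceCount_one_le hX₀)
    _ ≤ C * (⌊X⌋₊ : ℝ) ^ ((s : ℝ) + ε) := hbound _ (Nat.floor_pos.2 hX).ne'
    _ ≤ C * X ^ ((s : ℝ) + ε) := by
        gcongr
        exact Nat.floor_le hX₀
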